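/- arXiv:2503.13148 — 8 statements merged into one kernel-verified Lean document; each statement's English description precedes it below -/
import Mathlib

section
/- Let μ be a probability measure on ℕ×ℕ and let (X₁,Y₁), (X₂,Y₂), (X₃,Y₃) be independent random pairs each with law μ. Assume p_{ab} > 0 for all a,b ∈ {0,1}. Then Spearman's rho satisfies ρ_S = p₁₁·ρ_{S*} + 3·p₁₁·( p₁₀·(1 − 2p₁* − p₁†) + p₀₁·(1 − 2p₂* − p₂†) ) + 3·(p₀₀·p₁₁ − p₀₁·p₁₀), where ρ_{S*} = p₁₁²·ρ_{S₁₁} + p₁₁·p₁₀·ρ_{S₁₀} + p₁₁·p₀₁·ρ_{S₀₁} + p₀₁·p₁₀·ρ_{S₀₀}. -/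
/-!
With `K = sgn (X₁ - X₂) * sgn (Y₁ - Y₃)` one has `ρ_S = 3 E[K]`, and `P(S) ρ_S|S = 3 E[K; S]` for
every event `S` of positive probability. The events `S11`, `S10`, `S01`, `S00` partition `Sstar`
and are products of events about the single pairs, so the term `p₁₁ ρ_{S*}` is `3 E[K; Sstar]`
(`integral_Sstar_ker`).

Given the first pair `(x, y)`, the second and third pairs are independent, so the conditional mean
of `K` is `E[sgn (x - X)] * E[sgn (y - Y)]`. If `x = 0` the first factor is `-P(X > 0)`; if `x > 0`
it is `E[sgn (x - X); X > 0] + P(X = 0)`; likewise for `y`. Expanding the product on each of the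
four zero patterns of the first pair (`kernel_split`) isolates the contribution of `Sstar`. In the
other terms at most one genuine comparison is left, between a pair in one pattern and a pair in
another or the same pattern. It contributes zero by antisymmetry if the two patterns agree
(`cross_self`), and otherwise a multiple of `1 - 2p* - p†` (`cross_eq_Pr`). What remains is a
polynomial in the `p_{ab}`, simplified with `p₀₀ + p₀₁ + p₁₀ + p₁₁ = 1`.
-/

open MeasureTheory

namespace ZIS

/-- Sample space for three independent pairs `(X₁,Y₁), (X₂,Y₂), (X₃,Y₃)`. -/
abbrev Ω₃ : Type := (ℕ × ℕ) × (ℕ × ℕ) × (ℕ × ℕ)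

/-- Joint law of three independent pairs, each with law `μ`. -/
noncomputable def triple (μ : Measure (ℕ × ℕ)) : Measure Ω₃ := μ.prod (μ.prod μ)

def X₁ (ω : Ω₃) : ℕ := ω.1.1
def Y₁ (ω : Ω₃) : ℕ := ω.1.2
def X₂ (ω : Ω₃) : ℕ := ω.2.1.1
def Y₂ (ω : Ω₃) : ℕ := ω.2.1.2
def X₃ (ω : Ω₃) : ℕ := ω.2.2.1
def Y₃ (ω : Ω₃) : ℕ := ω.2.2.2

/-- Probability of an event for the three independent pairs. -/
noncomputable def Pr (μ : Measure (ℕ × ℕ)) (A : Set Ω₃) : ℝ := (triple μ A).toReal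

/-- Conditional probability `P(A | B)` for the three independent pairs. -/
noncomputable def cPr (μ : Measure (ℕ × ℕ)) (A B : Set Ω₃) : ℝ := Pr μ (A ∩ B) / Pr μ B

/-- The event `(X₁ - X₂)(Y₁ - Y₃) > 0` (concordance). -/
def Conc : Set Ω₃ := {ω | (X₁ ω < X₂ ω ∧ Y₁ ω < Y₃ ω) ∨ (X₂ ω < X₁ ω ∧ Y₃ ω < Y₁ ω)}

/-- The event `(X₁ - X₂)(Y₁ - Y₃) < 0` (discordance). -/
def Disc : Set Ω₃ := {ω | (X₁ ω < X₂ ω ∧ Y₃ ω < Y₁ ω) ∨ (X₂ ω < X₁ ω ∧ Y₁ ω < Y₃ ω)}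

/-- Spearman's rho: `ρ_S = 3·P((X₁−X₂)(Y₁−Y₃)>0) − 3·P((X₁−X₂)(Y₁−Y₃)<0)`. -/
noncomputable def rhoS (μ : Measure (ℕ × ℕ)) : ℝ := 3 * Pr μ Conc - 3 * Pr μ Disc

/-- Conditional Spearman's rho given the event `S`. -/
noncomputable def rhoCond (μ : Measure (ℕ × ℕ)) (S : Set Ω₃) : ℝ :=
  3 * cPr μ Conc S - 3 * cPr μ Disc S

/-- `p₁₁ = P(X > 0, Y > 0)`. -/
noncomputable def p11 (μ : Measure (ℕ × ℕ)) : ℝ := (μ {z : ℕ × ℕ | 0 < z.1 ∧ 0 < z.2}).toReal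
/-- `p₁₀ = P(X > 0, Y = 0)`. -/
noncomputable def p10 (μ : Measure (ℕ × ℕ)) : ℝ := (μ {z : ℕ × ℕ | 0 < z.1 ∧ z.2 = 0}).toReal
/-- `p₀₁ = P(X = 0, Y > 0)`. -/
noncomputable def p01 (μ : Measure (ℕ × ℕ)) : ℝ := (μ {z : ℕ × ℕ | z.1 = 0 ∧ 0 < z.2}).toReal
/-- `p₀₀ = P(X = 0, Y = 0)`. -/
noncomputable def p00 (μ : Measure (ℕ × ℕ)) : ℝ := (μ {z : ℕ × ℕ | z.1 = 0 ∧ z.2 = 0}).toReal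

/-- `S* = {X₁>0, Y₁>0, X₂>0, Y₃>0}`. -/
def Sstar : Set Ω₃ := {ω | 0 < X₁ ω ∧ 0 < Y₁ ω ∧ 0 < X₂ ω ∧ 0 < Y₃ ω}
def S11 : Set Ω₃ := Sstar ∩ {ω | 0 < X₃ ω ∧ 0 < Y₂ ω}
def S10 : Set Ω₃ := Sstar ∩ {ω | 0 < X₃ ω ∧ Y₂ ω = 0}
def S01 : Set Ω₃ := Sstar ∩ {ω | X₃ ω = 0 ∧ 0 < Y₂ ω}
def S00 : Set Ω₃ := Sstar ∩ {ω | X₃ ω = 0 ∧ Y₂ ω = 0}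

/-- `p₁* = P(X₁ > X₂ | X₁>0, Y₁=0, X₂>0, Y₂>0)`. -/
noncomputable def p1star (μ : Measure (ℕ × ℕ)) : ℝ :=
  cPr μ {ω | X₂ ω < X₁ ω} {ω | 0 < X₁ ω ∧ Y₁ ω = 0 ∧ 0 < X₂ ω ∧ 0 < Y₂ ω}
/-- `p₁† = P(X₁ = X₂ | X₁>0, Y₁=0, X₂>0, Y₂>0)`. -/
noncomputable def p1dag (μ : Measure (ℕ × ℕ)) : ℝ :=
  cPr μ {ω | X₁ ω = X₂ ω} {ω | 0 < X₁ ω ∧ Y₁ ω = 0 ∧ 0 < X₂ ω ∧ 0 < Y₂ ω}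
/-- `p₂* = P(Y₁ > Y₂ | X₁=0, Y₁>0, X₂>0, Y₂>0)`. -/
noncomputable def p2star (μ : Measure (ℕ × ℕ)) : ℝ :=
  cPr μ {ω | Y₂ ω < Y₁ ω} {ω | X₁ ω = 0 ∧ 0 < Y₁ ω ∧ 0 < X₂ ω ∧ 0 < Y₂ ω}
/-- `p₂† = P(Y₁ = Y₂ | X₁=0, Y₁>0, X₂>0, Y₂>0)`. -/
noncomputable def p2dag (μ : Measure (ℕ × ℕ)) : ℝ :=
  cPr μ {ω | Y₁ ω = Y₂ ω} {ω | X₁ ω = 0 ∧ 0 < Y₁ ω ∧ 0 < X₂ ω ∧ 0 < Y₂ ω}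

/-- Marginal CDF of the first component. -/
noncomputable def F (μ : Measure (ℕ × ℕ)) (x : ℕ) : ℝ := (μ {z : ℕ × ℕ | z.1 ≤ x}).toReal
/-- Marginal CDF of the second component. -/
noncomputable def G (μ : Measure (ℕ × ℕ)) (y : ℕ) : ℝ := (μ {z : ℕ × ℕ | z.2 ≤ y}).toReal

/-- The joint CDF equals the upper Fréchet–Hoeffding bound `min(F(x), G(y))`. -/
def Comonotone (μ : Measure (ℕ × ℕ)) : Prop :=
  ∀ x y : ℕ, (μ {z : ℕ × ℕ | z.1 ≤ x ∧ z.2 ≤ y}).toReal = min (F μ x) (G μ y)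

/-- The joint CDF equals the lower Fréchet–Hoeffding bound `max(F(x) + G(y) − 1, 0)`. -/
def Countermonotone (μ : Measure (ℕ × ℕ)) : Prop :=
  ∀ x y : ℕ, (μ {z : ℕ × ℕ | z.1 ≤ x ∧ z.2 ≤ y}).toReal = max (F μ x + G μ y - 1) 0

/-- `w(x, y) = 1 − F(x) − G(y)`. -/
noncomputable def w (μ : Measure (ℕ × ℕ)) (x y : ℕ) : ℝ := 1 - F μ x - G μ y

/-! ### Signs, indicators and comparisons -/

/-- The sign of `m - n`, as a real number. -/
noncomputable def sgn (m n : ℕ) : ℝ := if n < m then 1 else if m < n then -1 else 0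

/-- The set of pairs with both components positive, whose probability is `p11`. -/
def Q11 : Set (ℕ × ℕ) := {z | 0 < z.1 ∧ 0 < z.2}
/-- The set of pairs of probability `p10`. -/
def Q10 : Set (ℕ × ℕ) := {z | 0 < z.1 ∧ z.2 = 0}
/-- The set of pairs of probability `p01`. -/
def Q01 : Set (ℕ × ℕ) := {z | z.1 = 0 ∧ 0 < z.2}
/-- The set of pairs of probability `p00`. -/
def Q00 : Set (ℕ × ℕ) := {z | z.1 = 0 ∧ z.2 = 0}

/-- The real-valued indicator function of a set. -/
noncomputable def ind {α : Type*} (A : Set α) : α → ℝ := A.indicator fun _ => 1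

/-- The concordance kernel, the sign of `(X₁ - X₂)(Y₁ - Y₃)`. -/
noncomputable def ker (ω : Ω₃) : ℝ := sgn (X₁ ω) (X₂ ω) * sgn (Y₁ ω) (Y₃ ω)

/-- `sgn m n`, set to zero unless `n` is positive. -/
noncomputable def sgnPos (m n : ℕ) : ℝ := if 0 < n then sgn m n else 0

/-- `E[sgn (m - c(W)); c(W) > 0]` for `W` with law `μ`; the function `c` is one of the two
coordinates. -/
noncomputable def avgPos (μ : Measure (ℕ × ℕ)) (c : ℕ × ℕ → ℕ) (m : ℕ) : ℝ :=
  ∫ w, sgnPos m (c w) ∂μ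

/-- `E[sgn (c(Z) - c(W)); Z ∈ A, W ∈ B]` for independent `Z` and `W` with law `μ`. -/
noncomputable def cross (μ : Measure (ℕ × ℕ)) (c : ℕ × ℕ → ℕ) (A B : Set (ℕ × ℕ)) : ℝ :=
  ∫ z, ∫ w, ind A z * (ind B w * sgn (c z) (c w)) ∂μ ∂μ

lemma abs_sgn_le (m n : ℕ) : |sgn m n| ≤ 1 := by
  unfold sgn; split_ifs <;> simp

lemma abs_sgnPos_le (m n : ℕ) : |sgnPos m n| ≤ 1 := by
  unfold sgnPos; split_ifs
  · exact abs_sgn_le m n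
  · simp

lemma sgn_swap (m n : ℕ) : sgn m n = -sgn n m := by
  unfold sgn; split_ifs <;> first | omega | simp

lemma abs_ind_le {α : Type*} (A : Set α) (x : α) : |ind A x| ≤ 1 := by
  by_cases h : x ∈ A <;> simp [ind, h]

lemma abs_mul_le_one {a b : ℝ} (ha : |a| ≤ 1) (hb : |b| ≤ 1) : |a * b| ≤ 1 := by
  rw [abs_mul]; exact mul_le_one₀ ha (abs_nonneg b) hb

lemma integrable_of_abs_le_one {α : Type*} [MeasurableSpace α] [DiscreteMeasurableSpace α]
    [Countable α] (ν : Measure α) [IsFiniteMeasure ν] {f : α → ℝ} (h : ∀ x, |f x| ≤ 1) :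
    Integrable f ν :=
  Integrable.of_bound (Measurable.of_discrete.aestronglyMeasurable) 1
    (Filter.Eventually.of_forall h)

lemma integrable_fun_sub {α : Type*} [MeasurableSpace α] {ν : Measure α} {f g : α → ℝ}
    (hf : Integrable f ν) (hg : Integrable g ν) : Integrable (fun x => f x - g x) ν :=
  hf.sub hg

lemma integral_ind {α : Type*} [MeasurableSpace α] [DiscreteMeasurableSpace α]
    (ν : Measure α) (A : Set α) : ∫ x, ind A x ∂ν = (ν A).toReal := by
  unfold ind
  rw [integral_indicator_const _ (MeasurableSet.of_discrete)]
  simp [Measure.real]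

section

set_option linter.unusedSectionVars false

variable (μ : Measure (ℕ × ℕ)) [IsProbabilityMeasure μ]

instance : IsProbabilityMeasure (triple μ) := by unfold triple; infer_instance

lemma integral_ind_Q11 : ∫ z, ind Q11 z ∂μ = p11 μ := integral_ind μ _
lemma integral_ind_Q10 : ∫ z, ind Q10 z ∂μ = p10 μ := integral_ind μ _
lemma integral_ind_Q01 : ∫ z, ind Q01 z ∂μ = p01 μ := integral_ind μ _
lemma integral_ind_Q00 : ∫ z, ind Q00 z ∂μ = p00 μ := integral_ind μ _

lemma integrable_ind (A : Set (ℕ × ℕ)) : Integrable (ind A) μ :=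
  integrable_of_abs_le_one μ (abs_ind_le A)

lemma sum_p : p00 μ + p01 μ + p10 μ + p11 μ = 1 := by
  rw [← integral_ind_Q11, ← integral_ind_Q10, ← integral_ind_Q01, ← integral_ind_Q00,
    ← integral_add (integrable_ind μ _) (integrable_ind μ _),
    ← integral_add (.fun_add (integrable_ind μ _) (integrable_ind μ _)) (integrable_ind μ _),
    ← integral_add (.fun_add (.fun_add (integrable_ind μ _) (integrable_ind μ _)) (integrable_ind μ _))
      (integrable_ind μ _)]
  rw [integral_congr_ae (g := fun _ => (1 : ℝ))]
  · simp
  · refine Filter.Eventually.of_forall fun ⟨x, y⟩ => ?_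
    by_cases hx : x = 0 <;> by_cases hy : y = 0 <;>
      simp [ind, Q11, Q10, Q01, Q00, Nat.pos_iff_ne_zero, hx, hy]

/-! ### Spearman's rho as the mean of the concordance kernel -/

lemma Pr_prod (A B C : Set (ℕ × ℕ)) :
    Pr μ (A ×ˢ B ×ˢ C) = (μ A).toReal * ((μ B).toReal * (μ C).toReal) := by
  simp [Pr, triple, Measure.prod_prod, ENNReal.toReal_mul]

lemma Pr_eq_integral (A : Set Ω₃) : Pr μ A = ∫ ω, ind A ω ∂(triple μ) := (integral_ind _ A).symm

lemma Pr_Conc_sub_Pr_Disc (S : Set Ω₃) :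
    Pr μ (Conc ∩ S) - Pr μ (Disc ∩ S) = ∫ ω, ind S ω * ker ω ∂(triple μ) := by
  rw [Pr_eq_integral, Pr_eq_integral,
    ← integral_sub (integrable_of_abs_le_one _ (abs_ind_le _))
      (integrable_of_abs_le_one _ (abs_ind_le _))]
  congr 1; ext ω
  by_cases hS : ω ∈ S
  · simp only [ind, Set.indicator, Set.mem_inter_iff, hS, Conc, Disc, ker, sgn, Set.mem_ofPred_eq,
      and_true]
    split_ifs <;> first | omega | norm_num
  · simp [ind, hS]

lemma Pr_mul_rhoCond {S : Set Ω₃} (hS : Pr μ S ≠ 0) :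
    Pr μ S * rhoCond μ S = 3 * ∫ ω, ind S ω * ker ω ∂(triple μ) := by
  rw [← Pr_Conc_sub_Pr_Disc, rhoCond, cPr, cPr]
  field_simp

lemma rhoS_eq_integral : rhoS μ = 3 * ∫ ω, ker ω ∂(triple μ) := by
  have h := Pr_Conc_sub_Pr_Disc μ Set.univ
  simp only [Set.inter_univ, ind, Set.indicator_univ, one_mul] at h
  rw [← h, rhoS]; ring

lemma abs_ker_le (ω : Ω₃) : |ker ω| ≤ 1 := abs_mul_le_one (abs_sgn_le _ _) (abs_sgn_le _ _)

lemma Pr_S11 : Pr μ S11 = p11 μ ^ 3 := by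
  have : S11 = Q11 ×ˢ Q11 ×ˢ Q11 := by
    ext ω; simp [S11, Sstar, Q11, X₁, X₂, X₃, Y₁, Y₂, Y₃]; tauto
  rw [this, Pr_prod]; simp only [p11, Q11]; ring

lemma Pr_S10 : Pr μ S10 = p11 μ ^ 2 * p10 μ := by
  have : S10 = Q11 ×ˢ Q10 ×ˢ Q11 := by
    ext ω; simp [S10, Sstar, Q11, Q10, X₁, X₂, X₃, Y₁, Y₂, Y₃]; tauto
  rw [this, Pr_prod]; simp only [p11, p10, Q11, Q10]; ring

lemma Pr_S01 : Pr μ S01 = p11 μ ^ 2 * p01 μ := by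
  have : S01 = Q11 ×ˢ Q11 ×ˢ Q01 := by
    ext ω; simp [S01, Sstar, Q11, Q01, X₁, X₂, X₃, Y₁, Y₂, Y₃]; tauto
  rw [this, Pr_prod]; simp only [p11, p01, Q11, Q01]; ring

lemma Pr_S00 : Pr μ S00 = p11 μ * p01 μ * p10 μ := by
  have : S00 = Q11 ×ˢ Q10 ×ˢ Q01 := by
    ext ω; simp [S00, Sstar, Q11, Q10, Q01, X₁, X₂, X₃, Y₁, Y₂, Y₃]; tauto
  rw [this, Pr_prod]; simp only [p11, p10, p01, Q11, Q10, Q01]; ring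

/-- The four events `S11`, `S10`, `S01`, `S00` partition `Sstar`. -/
lemma integral_Sstar_ker : ∫ ω, ind Sstar ω * ker ω ∂(triple μ) =
    ∫ ω, ind S11 ω * ker ω ∂(triple μ) + ∫ ω, ind S10 ω * ker ω ∂(triple μ)
      + ∫ ω, ind S01 ω * ker ω ∂(triple μ) + ∫ ω, ind S00 ω * ker ω ∂(triple μ) := by
  have hi : ∀ S : Set Ω₃, Integrable (fun ω => ind S ω * ker ω) (triple μ) := fun S =>
    integrable_of_abs_le_one _ fun ω => abs_mul_le_one (abs_ind_le _ _) (abs_ker_le ω)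
  rw [← integral_add (hi _) (hi _), ← integral_add (.fun_add (hi _) (hi _)) (hi _),
    ← integral_add (.fun_add (.fun_add (hi _) (hi _)) (hi _)) (hi _)]
  congr 1; ext ω
  rw [← add_mul, ← add_mul, ← add_mul]
  congr 1
  by_cases hS : ω ∈ Sstar
  · by_cases hx : X₃ ω = 0 <;> by_cases hy : Y₂ ω = 0 <;>
      simp [ind, S11, S10, S01, S00, hS, Nat.pos_iff_ne_zero, hx, hy]
  · simp [ind, S11, S10, S01, S00, hS]

/-! ### Conditioning on the first pair -/

/-- Given the first pair, the second and the third pair are independent. -/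
lemma integral_triple_mul {f g : ℕ × ℕ → ℕ × ℕ → ℝ} {i : ℕ × ℕ → ℝ}
    (hi : ∀ z, |i z| ≤ 1) (hf : ∀ z w, |f z w| ≤ 1) (hg : ∀ z w, |g z w| ≤ 1) :
    ∫ ω : Ω₃, i ω.1 * (f ω.1 ω.2.1 * g ω.1 ω.2.2) ∂(triple μ) =
      ∫ z, i z * ((∫ w, f z w ∂μ) * ∫ w, g z w ∂μ) ∂μ := by
  unfold triple
  rw [integral_prod _ (integrable_of_abs_le_one _ fun ω =>
    abs_mul_le_one (hi _) (abs_mul_le_one (hf _ _) (hg _ _)))]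
  congr 1; ext z
  change ∫ y : (ℕ × ℕ) × (ℕ × ℕ), i z * (f z y.1 * g z y.2) ∂(μ.prod μ) = _
  rw [integral_const_mul, integral_prod_mul]

lemma integral_ker : ∫ ω, ker ω ∂(triple μ) =
    ∫ z : ℕ × ℕ, (∫ w : ℕ × ℕ, sgn z.1 w.1 ∂μ) * (∫ w : ℕ × ℕ, sgn z.2 w.2 ∂μ) ∂μ := by
  have h := integral_triple_mul μ (i := fun _ => 1)
    (f := fun z w => sgn z.1 w.1) (g := fun z w => sgn z.2 w.2) (by simp)
    (fun _ _ => abs_sgn_le _ _) (fun _ _ => abs_sgn_le _ _)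
  simp only [one_mul] at h
  exact h

lemma integral_Sstar_ker_eq : ∫ ω, ind Sstar ω * ker ω ∂(triple μ) =
    ∫ z : ℕ × ℕ, ind Q11 z * (avgPos μ Prod.fst z.1 * avgPos μ Prod.snd z.2) ∂μ := by
  unfold avgPos
  rw [← integral_triple_mul μ (i := ind Q11)
    (f := fun z w => sgnPos z.1 w.1) (g := fun z w => sgnPos z.2 w.2) (abs_ind_le _)
    (fun _ _ => abs_sgnPos_le _ _) (fun _ _ => abs_sgnPos_le _ _)]
  congr 1; ext ⟨⟨x₁, y₁⟩, ⟨x₂, y₂⟩, ⟨x₃, y₃⟩⟩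
  by_cases h₁ : 0 < x₁ <;> by_cases h₂ : 0 < y₁ <;> by_cases h₃ : 0 < x₂ <;>
    by_cases h₄ : 0 < y₃ <;>
    simp [ind, Set.indicator, Sstar, Q11, ker, sgnPos, X₁, X₂, Y₁, Y₃, h₁, h₂, h₃, h₄]

lemma abs_avgPos_le (c : ℕ × ℕ → ℕ) (m : ℕ) : |avgPos μ c m| ≤ 1 := by
  have := norm_integral_le_of_norm_le_const (μ := μ) (f := fun w => sgnPos m (c w)) (C := 1)
    (Filter.Eventually.of_forall fun w => abs_sgnPos_le m (c w))
  simpa [avgPos] using this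

lemma integral_sgn_zero (c : ℕ × ℕ → ℕ) :
    ∫ w, sgn 0 (c w) ∂μ = -(μ {w | 0 < c w}).toReal := by
  rw [← integral_ind, ← integral_neg]
  congr 1; ext w
  simp only [sgn, ind, Set.indicator, Set.mem_ofPred_eq]
  split_ifs <;> first | omega | simp

/-- A positive `m` wins against every `W` with `c(W) = 0`. -/
lemma integral_sgn_pos (c : ℕ × ℕ → ℕ) {m : ℕ} (hm : 0 < m) :
    ∫ w, sgn m (c w) ∂μ = avgPos μ c m + (μ {w | c w = 0}).toReal := by
  rw [← integral_ind, avgPos, ← integral_add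
    (integrable_of_abs_le_one _ fun _ => abs_sgnPos_le _ _)
    (integrable_of_abs_le_one _ (abs_ind_le _))]
  congr 1; ext w
  simp only [sgn, sgnPos, ind, Set.indicator, Set.mem_ofPred_eq]
  split_ifs <;> first | omega | simp

/-! ### Comparisons between two zero patterns -/

lemma integrable_cross (c : ℕ × ℕ → ℕ) (A B : Set (ℕ × ℕ)) :
    Integrable (fun p : (ℕ × ℕ) × (ℕ × ℕ) => ind A p.1 * (ind B p.2 * sgn (c p.1) (c p.2)))
      (μ.prod μ) :=
  integrable_of_abs_le_one _ fun _ =>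
    abs_mul_le_one (abs_ind_le _ _) (abs_mul_le_one (abs_ind_le _ _) (abs_sgn_le _ _))

lemma cross_swap (c : ℕ × ℕ → ℕ) (A B : Set (ℕ × ℕ)) : cross μ c A B = -cross μ c B A := by
  unfold cross
  rw [integral_integral_swap (integrable_cross μ c A B), ← integral_neg]
  congr 1; ext z
  rw [← integral_neg]
  congr 1; ext w
  rw [sgn_swap]; ring

lemma cross_self (c : ℕ × ℕ → ℕ) (A : Set (ℕ × ℕ)) : cross μ c A A = 0 := by
  linarith [cross_swap μ c A A]

/-- The set where `c` is positive is the disjoint union of two zero patterns `B` and `C`. -/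
lemma integral_mul_avgPos (c : ℕ × ℕ → ℕ) (A B C : Set (ℕ × ℕ))
    (hBC : ∀ w, ind B w + ind C w = ind {w | 0 < c w} w) :
    ∫ z, ind A z * avgPos μ c (c z) ∂μ = cross μ c A B + cross μ c A C := by
  unfold cross
  rw [← integral_add (integrable_cross μ c A B).integral_prod_left
    (integrable_cross μ c A C).integral_prod_left]
  congr 1; ext z
  rw [← integral_add (integrable_of_abs_le_one _ fun _ =>
      abs_mul_le_one (abs_ind_le _ _) (abs_mul_le_one (abs_ind_le _ _) (abs_sgn_le _ _)))
    (integrable_of_abs_le_one _ fun _ =>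
      abs_mul_le_one (abs_ind_le _ _) (abs_mul_le_one (abs_ind_le _ _) (abs_sgn_le _ _))),
    avgPos, ← integral_const_mul]
  congr 1; ext w
  rw [← mul_add, ← add_mul, hBC]
  simp [sgnPos, ind, Set.indicator]

lemma ind_pos_fst (w : ℕ × ℕ) : ind Q11 w + ind Q10 w = ind {w | 0 < w.1} w := by
  obtain ⟨x, y⟩ := w
  by_cases hx : x = 0 <;> by_cases hy : y = 0 <;>
    simp [ind, Q11, Q10, Nat.pos_iff_ne_zero, hx, hy]

lemma ind_pos_snd (w : ℕ × ℕ) : ind Q11 w + ind Q01 w = ind {w | 0 < w.2} w := by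
  obtain ⟨x, y⟩ := w
  by_cases hx : x = 0 <;> by_cases hy : y = 0 <;>
    simp [ind, Q11, Q01, Nat.pos_iff_ne_zero, hx, hy]

lemma ind_zero_fst (w : ℕ × ℕ) : ind Q00 w + ind Q01 w = ind {w | w.1 = 0} w := by
  obtain ⟨x, y⟩ := w
  by_cases hx : x = 0 <;> by_cases hy : y = 0 <;>
    simp [ind, Q00, Q01, Nat.pos_iff_ne_zero, hx, hy]

lemma ind_zero_snd (w : ℕ × ℕ) : ind Q00 w + ind Q10 w = ind {w | w.2 = 0} w := by
  obtain ⟨x, y⟩ := w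
  by_cases hx : x = 0 <;> by_cases hy : y = 0 <;>
    simp [ind, Q00, Q10, Nat.pos_iff_ne_zero, hx, hy]

lemma measure_eq_add {A B C : Set (ℕ × ℕ)} (h : ∀ w, ind B w + ind C w = ind A w) :
    (μ A).toReal = (μ B).toReal + (μ C).toReal := by
  rw [← integral_ind, ← integral_ind, ← integral_ind,
    ← integral_add (integrable_ind μ _) (integrable_ind μ _)]
  simp_rw [h]

/-- For independent `Z` and `W` with law `μ`, the conditional mean of `sgn (c(W) - c(Z))` given
`Z ∈ A` and `W ∈ B` is `P(c(Z) < c(W)) - P(c(Z) > c(W))`, that is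
`1 - 2 P(c(Z) > c(W)) - P(c(Z) = c(W))` with conditional probabilities. -/
lemma cross_eq_Pr (c : ℕ × ℕ → ℕ) (A B : Set (ℕ × ℕ))
    (h : Pr μ (A ×ˢ B ×ˢ Set.univ) ≠ 0) :
    cross μ c B A = (μ A).toReal * (μ B).toReal *
      (1 - 2 * cPr μ {ω | c ω.2.1 < c ω.1} (A ×ˢ B ×ˢ Set.univ)
        - cPr μ {ω | c ω.1 = c ω.2.1} (A ×ˢ B ×ˢ Set.univ)) := by
  have hP : Pr μ (A ×ˢ B ×ˢ Set.univ) = (μ A).toReal * (μ B).toReal := by simp [Pr_prod]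
  have key : cross μ c B A = Pr μ (A ×ˢ B ×ˢ Set.univ)
      - 2 * Pr μ ({ω | c ω.2.1 < c ω.1} ∩ (A ×ˢ B ×ˢ Set.univ))
      - Pr μ ({ω | c ω.1 = c ω.2.1} ∩ (A ×ˢ B ×ˢ Set.univ)) := by
    have hi : ∀ S : Set Ω₃, Integrable (ind S) (triple μ) := fun S =>
      integrable_of_abs_le_one _ (abs_ind_le S)
    rw [cross_swap, Pr_eq_integral, Pr_eq_integral, Pr_eq_integral, ← integral_const_mul,
      ← integral_sub (hi _) ((hi _).const_mul 2),
      ← integral_sub (integrable_fun_sub (hi _) ((hi _).const_mul 2)) (hi _)]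
    have h2 := integral_triple_mul μ (i := ind A)
      (f := fun z w => ind B w * sgn (c z) (c w)) (g := fun _ _ => 1) (abs_ind_le _)
      (fun _ _ => abs_mul_le_one (abs_ind_le _ _) (abs_sgn_le _ _)) (by simp)
    simp only [integral_const, probReal_univ, smul_eq_mul, mul_one] at h2
    simp only [cross, integral_const_mul]
    rw [← h2, ← integral_neg]
    congr 1; ext ⟨z, w, v⟩
    by_cases hz : z ∈ A <;> by_cases hw : w ∈ B <;>
      simp only [ind, Set.indicator, Set.mem_inter_iff, Set.mem_prod, hz, hw, Set.mem_univ,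
        Set.mem_ofPred_eq, sgn, and_true, and_false, if_false, if_true]
    · split_ifs <;> first | omega | norm_num
    all_goals norm_num
  rw [key, ← hP, cPr, cPr]
  field_simp

lemma cross_fst (h10 : 0 < p10 μ) (h11 : 0 < p11 μ) :
    cross μ Prod.fst Q11 Q10 = p10 μ * p11 μ * (1 - 2 * p1star μ - p1dag μ) := by
  have hB : ({ω | 0 < X₁ ω ∧ Y₁ ω = 0 ∧ 0 < X₂ ω ∧ 0 < Y₂ ω} : Set Ω₃)
      = Q10 ×ˢ Q11 ×ˢ Set.univ := by
    ext ω; simp [Q11, Q10, X₁, X₂, Y₁, Y₂]; tauto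
  have h : Pr μ (Q10 ×ˢ Q11 ×ˢ Set.univ) ≠ 0 := by
    rw [Pr_prod]; simpa [p10, p11, Q10, Q11] using (mul_pos h10 h11).ne'
  rw [p1star, p1dag, hB]
  exact cross_eq_Pr μ Prod.fst Q10 Q11 h

lemma cross_snd (h01 : 0 < p01 μ) (h11 : 0 < p11 μ) :
    cross μ Prod.snd Q11 Q01 = p01 μ * p11 μ * (1 - 2 * p2star μ - p2dag μ) := by
  have hB : ({ω | X₁ ω = 0 ∧ 0 < Y₁ ω ∧ 0 < X₂ ω ∧ 0 < Y₂ ω} : Set Ω₃)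
      = Q01 ×ˢ Q11 ×ˢ Set.univ := by
    ext ω; simp [Q11, Q01, X₁, X₂, Y₁, Y₂]; tauto
  have h : Pr μ (Q01 ×ˢ Q11 ×ˢ Set.univ) ≠ 0 := by
    rw [Pr_prod]; simpa [p01, p11, Q01, Q11] using (mul_pos h01 h11).ne'
  rw [p2star, p2dag, hB]
  exact cross_eq_Pr μ Prod.snd Q01 Q11 h

/-! ### Expansion over the zero patterns of the first pair -/

/-- The product of the two conditional means of the kernel, split according to which components
of the first pair vanish. -/
lemma kernel_split (z : ℕ × ℕ) :
    (∫ w : ℕ × ℕ, sgn z.1 w.1 ∂μ) * (∫ w : ℕ × ℕ, sgn z.2 w.2 ∂μ) =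
      ind Q11 z * (avgPos μ Prod.fst z.1 * avgPos μ Prod.snd z.2)
      + (p00 μ + p10 μ) * (ind Q11 z * avgPos μ Prod.fst z.1)
      + (p00 μ + p01 μ) * (ind Q11 z * avgPos μ Prod.snd z.2)
      + (p00 μ + p01 μ) * (p00 μ + p10 μ) * ind Q11 z
      - (p11 μ + p01 μ) * (ind Q10 z * avgPos μ Prod.fst z.1)
      - (p11 μ + p01 μ) * (p00 μ + p01 μ) * ind Q10 z
      - (p11 μ + p10 μ) * (ind Q01 z * avgPos μ Prod.snd z.2)
      - (p11 μ + p10 μ) * (p00 μ + p10 μ) * ind Q01 z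
      + (p11 μ + p10 μ) * (p11 μ + p01 μ) * ind Q00 z := by
  have e1 : (μ {w : ℕ × ℕ | 0 < w.1}).toReal = p11 μ + p10 μ := measure_eq_add μ ind_pos_fst
  have e2 : (μ {w : ℕ × ℕ | 0 < w.2}).toReal = p11 μ + p01 μ := measure_eq_add μ ind_pos_snd
  have e3 : (μ {w : ℕ × ℕ | w.1 = 0}).toReal = p00 μ + p01 μ := measure_eq_add μ ind_zero_fst
  have e4 : (μ {w : ℕ × ℕ | w.2 = 0}).toReal = p00 μ + p10 μ := measure_eq_add μ ind_zero_snd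
  obtain ⟨x, y⟩ := z
  rcases Nat.eq_zero_or_pos x with rfl | hx <;> rcases Nat.eq_zero_or_pos y with rfl | hy
  · rw [integral_sgn_zero μ Prod.fst, integral_sgn_zero μ Prod.snd, e1, e2]
    simp [ind, Q11, Q10, Q01, Q00]; ring
  · rw [integral_sgn_zero μ Prod.fst, integral_sgn_pos μ Prod.snd hy, e1, e4]
    simp [ind, Q11, Q10, Q01, Q00, hy, hy.ne']; ring
  · rw [integral_sgn_pos μ Prod.fst hx, integral_sgn_zero μ Prod.snd, e2, e3]
    simp [ind, Q11, Q10, Q01, Q00, hx, hx.ne']; ring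
  · rw [integral_sgn_pos μ Prod.fst hx, integral_sgn_pos μ Prod.snd hy, e3, e4]
    simp [ind, Q11, Q10, Q01, Q00, hx, hx.ne', hy, hy.ne']; ring

/-- The mean of the kernel, before the total mass `p00 + p01 + p10 + p11` is set to `1`. -/
lemma integral_ker_eq : ∫ ω, ker ω ∂(triple μ) =
    ∫ ω, ind Sstar ω * ker ω ∂(triple μ)
      + (p00 μ + p10 μ + p11 μ + p01 μ) * cross μ Prod.fst Q11 Q10
      + (p00 μ + p01 μ + p11 μ + p10 μ) * cross μ Prod.snd Q11 Q01
      + (p00 μ + p01 μ) * (p00 μ + p10 μ) * p11 μ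
      - (p11 μ + p01 μ) * (p00 μ + p01 μ) * p10 μ
      - (p11 μ + p10 μ) * (p00 μ + p10 μ) * p01 μ
      + (p11 μ + p10 μ) * (p11 μ + p01 μ) * p00 μ := by
  have ix : ∀ A : Set (ℕ × ℕ), Integrable (fun z => ind A z * avgPos μ Prod.fst z.1) μ :=
    fun A => integrable_of_abs_le_one _ fun _ =>
      abs_mul_le_one (abs_ind_le _ _) (abs_avgPos_le μ _ _)
  have iy : ∀ A : Set (ℕ × ℕ), Integrable (fun z => ind A z * avgPos μ Prod.snd z.2) μ :=
    fun A => integrable_of_abs_le_one _ fun _ =>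
      abs_mul_le_one (abs_ind_le _ _) (abs_avgPos_le μ _ _)
  have ixy : Integrable
      (fun z => ind Q11 z * (avgPos μ Prod.fst z.1 * avgPos μ Prod.snd z.2)) μ :=
    integrable_of_abs_le_one _ fun _ => abs_mul_le_one (abs_ind_le _ _)
      (abs_mul_le_one (abs_avgPos_le μ _ _) (abs_avgPos_le μ _ _))
  have hx : ∀ A : Set (ℕ × ℕ), ∫ z, ind A z * avgPos μ Prod.fst z.1 ∂μ
      = cross μ Prod.fst A Q11 + cross μ Prod.fst A Q10 :=
    fun A => integral_mul_avgPos μ Prod.fst A Q11 Q10 ind_pos_fst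
  have hy : ∀ A : Set (ℕ × ℕ), ∫ z, ind A z * avgPos μ Prod.snd z.2 ∂μ
      = cross μ Prod.snd A Q11 + cross μ Prod.snd A Q01 :=
    fun A => integral_mul_avgPos μ Prod.snd A Q11 Q01 ind_pos_snd
  have j1 := ixy.fun_add ((ix Q11).const_mul (p00 μ + p10 μ))
  have j2 := j1.fun_add ((iy Q11).const_mul (p00 μ + p01 μ))
  have j3 := j2.fun_add ((integrable_ind μ Q11).const_mul ((p00 μ + p01 μ) * (p00 μ + p10 μ)))
  have j4 := integrable_fun_sub j3 ((ix Q10).const_mul (p11 μ + p01 μ))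
  have j5 := integrable_fun_sub j4 ((integrable_ind μ Q10).const_mul ((p11 μ + p01 μ) * (p00 μ + p01 μ)))
  have j6 := integrable_fun_sub j5 ((iy Q01).const_mul (p11 μ + p10 μ))
  have j7 := integrable_fun_sub j6 ((integrable_ind μ Q01).const_mul ((p11 μ + p10 μ) * (p00 μ + p10 μ)))
  have j8 := (integrable_ind μ Q00).const_mul ((p11 μ + p10 μ) * (p11 μ + p01 μ))
  rw [integral_ker, integral_Sstar_ker_eq]
  simp_rw [kernel_split μ]
  rw [integral_add j7 j8,
    integral_sub j6 ((integrable_ind μ Q01).const_mul _),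
    integral_sub j5 ((iy Q01).const_mul _),
    integral_sub j4 ((integrable_ind μ Q10).const_mul _),
    integral_sub j3 ((ix Q10).const_mul _),
    integral_add j2 ((integrable_ind μ Q11).const_mul _),
    integral_add j1 ((iy Q11).const_mul _),
    integral_add ixy ((ix Q11).const_mul _)]
  simp only [integral_const_mul, hx, hy, integral_ind_Q11, integral_ind_Q10, integral_ind_Q01,
    integral_ind_Q00, cross_self, cross_swap μ _ Q10 Q11, cross_swap μ _ Q01 Q11]
  ring

end

/-- Theorem 1 (Spearman's rho for zero-inflated count data):
`ρ_S = p₁₁·ρ_{S*} + 3·p₁₁·(p₁₀·(1 − 2p₁* − p₁†) + p₀₁·(1 − 2p₂* − p₂†)) + 3·(p₀₀·p₁₁ − p₀₁·p₁₀)`,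
where `ρ_{S*} = p₁₁²·ρ_{S₁₁} + p₁₁·p₁₀·ρ_{S₁₀} + p₁₁·p₀₁·ρ_{S₀₁} + p₀₁·p₁₀·ρ_{S₀₀}`. -/
theorem spearman_rho_zero_inflated_count
    (μ : Measure (ℕ × ℕ)) [IsProbabilityMeasure μ]
    (h00 : 0 < p00 μ) (h01 : 0 < p01 μ) (h10 : 0 < p10 μ) (h11 : 0 < p11 μ) :
    rhoS μ =
      p11 μ * (p11 μ ^ 2 * rhoCond μ S11 + p11 μ * p10 μ * rhoCond μ S10
          + p11 μ * p01 μ * rhoCond μ S01 + p01 μ * p10 μ * rhoCond μ S00)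
        + 3 * p11 μ * (p10 μ * (1 - 2 * p1star μ - p1dag μ)
          + p01 μ * (1 - 2 * p2star μ - p2dag μ))
        + 3 * (p00 μ * p11 μ - p01 μ * p10 μ) := by
  have e11 := Pr_mul_rhoCond μ (S := S11) (by rw [Pr_S11]; positivity)
  have e10 := Pr_mul_rhoCond μ (S := S10) (by rw [Pr_S10]; positivity)
  have e01 := Pr_mul_rhoCond μ (S := S01) (by rw [Pr_S01]; positivity)
  have e00 := Pr_mul_rhoCond μ (S := S00) (by rw [Pr_S00]; positivity)
  rw [Pr_S11] at e11
  rw [Pr_S10] at e10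
  rw [Pr_S01] at e01
  rw [Pr_S00] at e00
  -- The identity is only valid on the hyperplane where the four masses sum to `1`.
  have hs : p00 μ = 1 - p01 μ - p10 μ - p11 μ := by linarith [sum_p μ]
  rw [rhoS_eq_integral, integral_ker_eq, integral_Sstar_ker, cross_fst μ h10 h11,
    cross_snd μ h01 h11, hs]
  linear_combination -e11 - e10 - e01 - e00

end ZIS
end

section
/- Let μ be a probability measure on ℕ×ℕ and let (X₁,Y₁), (X₂,Y₂), (X₃,Y₃) be independent random pairs each with law μ. Assume p₀₁ > 0 and p₁₁ > 0. Writing C₀₁₁₁ = {X₁=0, Y₁>0, X₂>0, Y₃>0} and C₁₁₀₁ = {X₁>0, Y₁>0, X₂=0, Y₃>0}, one has ( P(Y₁<Y₃ | C₀₁₁₁) − P(Y₁>Y₃ | C₀₁₁₁) )·p₀₁·(p₁₁+p₁₀)·(p₁₁+p₀₁) + ( P(Y₁>Y₃ | C₁₁₀₁) − P(Y₁<Y₃ | C₁₁₀₁) )·p₁₁·(p₀₀+p₀₁)·(p₁₁+p₀₁) = p₁₁·p₀₁·(1 − 2p₂* − p₂†). -/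
/-!
Once the denominators are cleared, each conditional probability on the left becomes the probability
of an event on the first and third pairs times a factor `P(X₂ > 0)` or `P(X₂ = 0)` coming from the
independent second pair (`cPr_C0111_mul`, `cPr_C1101_mul`). The event `Y₃ > 0` is then split by
whether `X₃ = 0` or `X₃ > 0` (`Pr2_ZY`). When `X₁` and `X₃` are both zero or both positive, the two
pairs are exchangeable, so `Y₁ < Y₃` and `Y₃ < Y₁` are equally likely and these contributions cancel
(`Pr2_Gt_comm`). What remains is the same difference `a - b` in both terms, where `a` and `b` are
the probabilities of `Y < Y'` and `Y > Y'` on the event `X = 0, Y > 0, X' > 0, Y' > 0` for two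
independent pairs, and its weights `P(X > 0)` and `P(X = 0)` sum to one. With `c` the
probability of a tie on that event, `a + b + c = p₁₁ p₀₁` (`Pr2_trichotomy`), hence
`a - b = p₁₁ p₀₁ - 2 b - c`, which is the right-hand side.
-/

open MeasureTheory

namespace ZIS

/-- The event `C₀₁₁₁ = {X₁ = 0, Y₁ > 0, X₂ > 0, Y₃ > 0}`. -/
def C0111 : Set Ω₃ := {ω | X₁ ω = 0 ∧ 0 < Y₁ ω ∧ 0 < X₂ ω ∧ 0 < Y₃ ω}

/-- The event `C₁₁₀₁ = {X₁ > 0, Y₁ > 0, X₂ = 0, Y₃ > 0}`. -/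
def C1101 : Set Ω₃ := {ω | 0 < X₁ ω ∧ 0 < Y₁ ω ∧ X₂ ω = 0 ∧ 0 < Y₃ ω}

/-- Law of two independent pairs, each with law `μ`, as a real-valued set function. -/
noncomputable def Pr2 (μ : Measure (ℕ × ℕ)) (S : Set ((ℕ × ℕ) × (ℕ × ℕ))) : ℝ :=
  ((μ.prod μ) S).toReal

/-- An event on the first and third pairs is independent of an event on the second pair. -/
lemma Pr_first_third (μ : Measure (ℕ × ℕ)) [IsProbabilityMeasure μ]
    (S : Set ((ℕ × ℕ) × (ℕ × ℕ))) (T : Set (ℕ × ℕ)) :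
    Pr μ {ω | (ω.1, ω.2.2) ∈ S ∧ ω.2.1 ∈ T} = Pr2 μ S * (μ T).toReal := by
  have hswap : MeasurePreserving (Prod.map id Prod.swap)
      (μ.prod (μ.prod μ)) (μ.prod (μ.prod μ)) :=
    (MeasurePreserving.id μ).prod Measure.measurePreserving_swap
  have h := ((measurePreserving_prodAssoc μ μ μ).symm).comp hswap
  have hpre := h.measure_preimage (s := S ×ˢ T) MeasurableSet.of_discrete.nullMeasurableSet
  rw [Measure.prod_prod] at hpre
  rw [Pr, Pr2, ← ENNReal.toReal_mul, ← hpre]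
  rfl

/-- The third pair can be integrated out. -/
lemma Pr_first_second (μ : Measure (ℕ × ℕ)) [IsProbabilityMeasure μ]
    (S : Set ((ℕ × ℕ) × (ℕ × ℕ))) :
    Pr μ {ω | (ω.1, ω.2.1) ∈ S} = Pr2 μ S := by
  have h := (measurePreserving_prodAssoc μ μ μ).symm
  have hpre := h.measure_preimage (s := S ×ˢ Set.univ) MeasurableSet.of_discrete.nullMeasurableSet
  rw [Measure.prod_prod, measure_univ, mul_one] at hpre
  rw [Pr, Pr2, ← hpre]
  congr 1
  unfold triple
  congr 1
  ext ω
  simp [MeasurableEquiv.prodAssoc]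

lemma Pr2_swap (μ : Measure (ℕ × ℕ)) [IsProbabilityMeasure μ]
    (S : Set ((ℕ × ℕ) × (ℕ × ℕ))) : Pr2 μ (Prod.swap ⁻¹' S) = Pr2 μ S := by
  rw [Pr2, Measure.measurePreserving_swap.measure_preimage
    MeasurableSet.of_discrete.nullMeasurableSet, Pr2]

lemma Pr2_prod (μ : Measure (ℕ × ℕ)) [IsProbabilityMeasure μ] (A B : Set (ℕ × ℕ)) :
    Pr2 μ (A ×ˢ B) = (μ A).toReal * (μ B).toReal := by
  rw [Pr2, Measure.prod_prod, ENNReal.toReal_mul]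

lemma Pr2_split (μ : Measure (ℕ × ℕ)) [IsProbabilityMeasure μ]
    (S T : Set ((ℕ × ℕ) × (ℕ × ℕ))) : Pr2 μ S = Pr2 μ (S ∩ T) + Pr2 μ (S \ T) := by
  simp only [Pr2]
  exact (measureReal_inter_add_sdiff MeasurableSet.of_discrete).symm

lemma toReal_split (μ : Measure (ℕ × ℕ)) [IsProbabilityMeasure μ]
    (S T : Set (ℕ × ℕ)) : (μ S).toReal = (μ (S ∩ T)).toReal + (μ (S \ T)).toReal :=
  (measureReal_inter_add_sdiff MeasurableSet.of_discrete).symm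

/-- The event `{X = 0, Y > 0}` for a single pair. -/
def Z01 : Set (ℕ × ℕ) := {z | z.1 = 0 ∧ 0 < z.2}
/-- The event `{X > 0, Y > 0}` for a single pair. -/
def Z11 : Set (ℕ × ℕ) := {z | 0 < z.1 ∧ 0 < z.2}
/-- The event `{Y > 0}` for a single pair. -/
def ZY : Set (ℕ × ℕ) := {z | 0 < z.2}
/-- The event `{Y < Y'}` for two pairs `(X, Y)` and `(X', Y')`. -/
def Lt : Set ((ℕ × ℕ) × (ℕ × ℕ)) := {z | z.1.2 < z.2.2}
/-- The event `{Y' < Y}` for two pairs `(X, Y)` and `(X', Y')`. -/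
def Gt : Set ((ℕ × ℕ) × (ℕ × ℕ)) := {z | z.2.2 < z.1.2}
/-- The event `{Y = Y'}` for two pairs `(X, Y)` and `(X', Y')`. -/
def Eqv : Set ((ℕ × ℕ) × (ℕ × ℕ)) := {z | z.1.2 = z.2.2}

/-- Interchanging the two pairs reverses the comparison of the `Y`-coordinates. -/
lemma Pr2_Gt_comm (μ : Measure (ℕ × ℕ)) [IsProbabilityMeasure μ] (A B : Set (ℕ × ℕ)) :
    Pr2 μ (Gt ∩ A ×ˢ B) = Pr2 μ (Lt ∩ B ×ˢ A) := by
  rw [← Pr2_swap]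
  congr 1
  ext z
  simp [Lt, Gt, and_comm]

/-- The event `Y > 0` for the second pair is split according to whether `X = 0` or `X > 0`. -/
lemma Pr2_ZY (μ : Measure (ℕ × ℕ)) [IsProbabilityMeasure μ]
    (R : Set ((ℕ × ℕ) × (ℕ × ℕ))) (A : Set (ℕ × ℕ)) :
    Pr2 μ (R ∩ A ×ˢ ZY) = Pr2 μ (R ∩ A ×ˢ Z01) + Pr2 μ (R ∩ A ×ˢ Z11) := by
  rw [Pr2_split μ _ {z | z.2.1 = 0}]
  congr 2 <;>
  · ext z
    simp only [ZY, Z01, Z11, Set.mem_inter_iff, Set.mem_sdiff, Set.mem_prod, Set.mem_ofPred_eq]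
    grind

/-- Trichotomy for the `Y`-coordinates of two independent pairs. -/
lemma Pr2_trichotomy (μ : Measure (ℕ × ℕ)) [IsProbabilityMeasure μ] (A B : Set (ℕ × ℕ)) :
    (μ A).toReal * (μ B).toReal
      = Pr2 μ (Lt ∩ A ×ˢ B) + Pr2 μ (Gt ∩ A ×ˢ B) + Pr2 μ (Eqv ∩ A ×ˢ B) := by
  have hLt : A ×ˢ B ∩ Lt = Lt ∩ A ×ˢ B := Set.inter_comm _ _
  have hGt : (A ×ˢ B \ Lt) ∩ Gt = Gt ∩ A ×ˢ B := by
    ext z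
    simp only [Lt, Gt, Set.mem_inter_iff, Set.mem_sdiff, Set.mem_ofPred_eq]
    grind
  have hEq : (A ×ˢ B \ Lt) \ Gt = Eqv ∩ A ×ˢ B := by
    ext z
    simp only [Lt, Gt, Eqv, Set.mem_inter_iff, Set.mem_sdiff, Set.mem_ofPred_eq]
    grind
  rw [← Pr2_prod, Pr2_split μ _ Lt, Pr2_split μ (A ×ˢ B \ Lt) Gt, ← add_assoc, hLt, hGt, hEq]

lemma toReal_Xpos (μ : Measure (ℕ × ℕ)) [IsProbabilityMeasure μ] :
    (μ {z | 0 < z.1}).toReal = p11 μ + p10 μ := by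
  rw [toReal_split μ _ {z | 0 < z.2}]
  unfold p11 p10
  congr 3
  ext z
  simp

lemma toReal_Xzero (μ : Measure (ℕ × ℕ)) [IsProbabilityMeasure μ] :
    (μ {z | z.1 = 0}).toReal = p00 μ + p01 μ := by
  rw [toReal_split μ _ {z | 0 < z.2}, add_comm]
  unfold p00 p01
  congr 3
  ext z
  simp

lemma toReal_Ypos (μ : Measure (ℕ × ℕ)) [IsProbabilityMeasure μ] :
    (μ ZY).toReal = p11 μ + p01 μ := by
  rw [toReal_split μ _ {z | 0 < z.1}]
  unfold p11 p01
  congr 3 <;>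
  · ext z
    simp [ZY, and_comm]

lemma total_mass (μ : Measure (ℕ × ℕ)) [IsProbabilityMeasure μ] :
    (p11 μ + p10 μ) + (p00 μ + p01 μ) = 1 := by
  have h := toReal_split μ Set.univ {z | 0 < z.1}
  rw [measure_univ, ENNReal.toReal_one, Set.univ_inter, toReal_Xpos] at h
  have hc : Set.univ \ {z : ℕ × ℕ | 0 < z.1} = {z | z.1 = 0} := by
    ext z
    simp
  rw [hc, toReal_Xzero] at h
  exact h.symm

/-- Conditional probability given `C0111`, cleared of its denominator. -/
lemma cPr_C0111_mul (μ : Measure (ℕ × ℕ)) [IsProbabilityMeasure μ]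
    (h01 : 0 < p01 μ) (h11 : 0 < p11 μ) (R : Set ((ℕ × ℕ) × (ℕ × ℕ))) :
    cPr μ {ω | (ω.1, ω.2.2) ∈ R} C0111 * (p01 μ * (p11 μ + p10 μ) * (p11 μ + p01 μ))
      = Pr2 μ (R ∩ Z01 ×ˢ ZY) * (p11 μ + p10 μ) := by
  have hn : Pr μ ({ω | (ω.1, ω.2.2) ∈ R} ∩ C0111)
      = Pr2 μ (R ∩ Z01 ×ˢ ZY) * (p11 μ + p10 μ) := by
    rw [← toReal_Xpos, ← Pr_first_third]
    congr 1
    ext ω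
    simp only [C0111, Z01, ZY, X₁, X₂, Y₁, Y₃, Set.mem_inter_iff, Set.mem_prod, Set.mem_ofPred_eq]
    tauto
  have hd : Pr μ C0111 = p01 μ * (p11 μ + p10 μ) * (p11 μ + p01 μ) := by
    have : Pr μ C0111 = Pr2 μ (Z01 ×ˢ ZY) * (p11 μ + p10 μ) := by
      rw [← toReal_Xpos, ← Pr_first_third]
      congr 1
      ext ω
      simp only [C0111, Z01, ZY, X₁, X₂, Y₁, Y₃, Set.mem_prod, Set.mem_ofPred_eq]
      tauto
    rw [this, Pr2_prod, toReal_Ypos]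
    change p01 μ * _ * _ = _
    ring
  have h10 : 0 ≤ p10 μ := ENNReal.toReal_nonneg
  rw [cPr, hn, hd, div_mul_cancel₀]
  positivity

/-- Conditional probability given `C1101`, cleared of its denominator. -/
lemma cPr_C1101_mul (μ : Measure (ℕ × ℕ)) [IsProbabilityMeasure μ]
    (h01 : 0 < p01 μ) (h11 : 0 < p11 μ) (R : Set ((ℕ × ℕ) × (ℕ × ℕ))) :
    cPr μ {ω | (ω.1, ω.2.2) ∈ R} C1101 * (p11 μ * (p00 μ + p01 μ) * (p11 μ + p01 μ))
      = Pr2 μ (R ∩ Z11 ×ˢ ZY) * (p00 μ + p01 μ) := by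
  have hn : Pr μ ({ω | (ω.1, ω.2.2) ∈ R} ∩ C1101)
      = Pr2 μ (R ∩ Z11 ×ˢ ZY) * (p00 μ + p01 μ) := by
    rw [← toReal_Xzero, ← Pr_first_third]
    congr 1
    ext ω
    simp only [C1101, Z11, ZY, X₁, X₂, Y₁, Y₃, Set.mem_inter_iff, Set.mem_prod, Set.mem_ofPred_eq]
    tauto
  have hd : Pr μ C1101 = p11 μ * (p00 μ + p01 μ) * (p11 μ + p01 μ) := by
    have : Pr μ C1101 = Pr2 μ (Z11 ×ˢ ZY) * (p00 μ + p01 μ) := by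
      rw [← toReal_Xzero, ← Pr_first_third]
      congr 1
      ext ω
      simp only [C1101, Z11, ZY, X₁, X₂, Y₁, Y₃, Set.mem_prod, Set.mem_ofPred_eq]
      tauto
    rw [this, Pr2_prod, toReal_Ypos]
    change p11 μ * _ * _ = _
    ring
  have h00 : 0 ≤ p00 μ := ENNReal.toReal_nonneg
  rw [cPr, hn, hd, div_mul_cancel₀]
  positivity

/-- The conditional probabilities defining `p2star` and `p2dag`, cleared of their denominator. -/
lemma mul_cPr_first_second (μ : Measure (ℕ × ℕ)) [IsProbabilityMeasure μ]
    (h01 : 0 < p01 μ) (h11 : 0 < p11 μ) (R : Set ((ℕ × ℕ) × (ℕ × ℕ))) :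
    p11 μ * p01 μ * cPr μ {ω | (ω.1, ω.2.1) ∈ R}
        {ω | X₁ ω = 0 ∧ 0 < Y₁ ω ∧ 0 < X₂ ω ∧ 0 < Y₂ ω}
      = Pr2 μ (R ∩ Z01 ×ˢ Z11) := by
  have hset : {ω | X₁ ω = 0 ∧ 0 < Y₁ ω ∧ 0 < X₂ ω ∧ 0 < Y₂ ω}
      = {ω : Ω₃ | (ω.1, ω.2.1) ∈ Z01 ×ˢ Z11} := by
    ext ω
    simp only [Z01, Z11, X₁, X₂, Y₁, Y₂, Set.mem_prod, Set.mem_ofPred_eq]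
    tauto
  have hd : Pr2 μ (Z01 ×ˢ Z11) = p11 μ * p01 μ := by
    rw [Pr2_prod, mul_comm]
    rfl
  rw [cPr, hset, Pr_first_second, hd, mul_div_cancel₀ _ (by positivity), ← Pr_first_second]
  rfl

/-- Simplification of the `Y`-terms `A_Y` in the proof of the decomposition of Spearman's rho. -/
theorem AY_simplification (μ : Measure (ℕ × ℕ)) [IsProbabilityMeasure μ]
    (h01 : 0 < p01 μ) (h11 : 0 < p11 μ) :
    (cPr μ {ω | Y₁ ω < Y₃ ω} C0111 - cPr μ {ω | Y₃ ω < Y₁ ω} C0111)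
        * p01 μ * (p11 μ + p10 μ) * (p11 μ + p01 μ)
      + (cPr μ {ω | Y₃ ω < Y₁ ω} C1101 - cPr μ {ω | Y₁ ω < Y₃ ω} C1101)
        * p11 μ * (p00 μ + p01 μ) * (p11 μ + p01 μ)
      = p11 μ * p01 μ * (1 - 2 * p2star μ - p2dag μ) := by
  have hL0 := cPr_C0111_mul μ h01 h11 Lt
  have hG0 := cPr_C0111_mul μ h01 h11 Gt
  have hL1 := cPr_C1101_mul μ h01 h11 Lt
  have hG1 := cPr_C1101_mul μ h01 h11 Gt
  have hs : p11 μ * p01 μ * p2star μ = _ := mul_cPr_first_second μ h01 h11 Gt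
  have hd : p11 μ * p01 μ * p2dag μ = _ := mul_cPr_first_second μ h01 h11 Eqv
  have htri : p01 μ * p11 μ = _ := Pr2_trichotomy μ Z01 Z11
  rw [Pr2_ZY] at hL0 hG0 hL1 hG1
  rw [Pr2_Gt_comm μ Z01 Z01, Pr2_Gt_comm μ Z01 Z11] at hG0
  rw [Pr2_Gt_comm μ Z11 Z01, Pr2_Gt_comm μ Z11 Z11] at hG1
  rw [Pr2_Gt_comm μ Z01 Z11] at hs htri
  change (cPr μ {ω | (ω.1, ω.2.2) ∈ Lt} C0111 - cPr μ {ω | (ω.1, ω.2.2) ∈ Gt} C0111)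
        * p01 μ * (p11 μ + p10 μ) * (p11 μ + p01 μ)
      + (cPr μ {ω | (ω.1, ω.2.2) ∈ Gt} C1101 - cPr μ {ω | (ω.1, ω.2.2) ∈ Lt} C1101)
        * p11 μ * (p00 μ + p01 μ) * (p11 μ + p01 μ) = _
  linear_combination hL0 - hG0 + hG1 - hL1 + 2 * hs + hd - htri
    + (Pr2 μ (Lt ∩ Z01 ×ˢ Z11) - Pr2 μ (Lt ∩ Z11 ×ˢ Z01)) * total_mass μ

end ZIS
end

section
/- Let μ be a probability measure on ℕ×ℕ with marginal CDFs F, G and suppose μ is comonotone, i.e. μ({(a,b) : a ≤ x, b ≤ y}) = min(F(x), G(y)) for all x,y ∈ ℕ. Set p₁ = F(0), p₂ = G(0) and assume p₁ ≤ p₂. If s̃ ≥ 1 satisfies F(s̃−1) ≤ p₂ < F(s̃), then for every y ≥ 1, μ({(a,b) : a = s̃, 1 ≤ b ≤ y}) = min(F(s̃), G(y)) − p₂. -/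
/-!
With `H x y = P(X ≤ x, Y ≤ y) = min (F x) (G y)`, the event `X = s, 1 ≤ Y ≤ y` is a rectangle of mass
`H s y - H (s - 1) y - H s 0 + H (s - 1) 0`. The crossing condition `F (s - 1) ≤ G 0 < F s` gives
`H (s - 1) y = H (s - 1) 0 = F (s - 1)`, and these cancel, while `H s 0 = G 0`. What remains is
`min (F s) (G y) - G 0`.
-/

open MeasureTheory

namespace ZIS

/-- Under the comonotone coupling with `p₁ ≤ p₂` and crossing point `s̃`:
`P(X = s̃, 0 < Y ≤ y) = min(F(s̃), G(y)) − p₂` for all `y ≥ 1`. -/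
theorem comonotone_section_at_crossing (μ : Measure (ℕ × ℕ)) [IsProbabilityMeasure μ]
    (hcom : Comonotone μ) (p₁ p₂ : ℝ) (hp₁ : p₁ = F μ 0) (hp₂ : p₂ = G μ 0)
    (h12 : p₁ ≤ p₂)
    (s : ℕ) (hs : 1 ≤ s) (hsl : F μ (s - 1) ≤ p₂) (hsr : p₂ < F μ s) :
    ∀ y : ℕ, 1 ≤ y →
      (μ {z : ℕ × ℕ | z.1 = s ∧ 1 ≤ z.2 ∧ z.2 ≤ y}).toReal
        = min (F μ s) (G μ y) - p₂ := by
  intro y hy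
  subst hp₂
  have hA := hcom s y
  have hB := hcom (s - 1) y
  have hC := hcom s 0
  have hD := hcom (s - 1) 0
  have hG : G μ 0 ≤ G μ y :=
    ENNReal.toReal_mono (measure_ne_top μ _)
      (measure_mono fun z (hz : z.2 ≤ 0) => hz.trans (Nat.zero_le y))
  -- The crossing condition decides every minimum except the one at `(s, y)`.
  rw [min_eq_left (hsl.trans hG)] at hB
  rw [min_eq_right hsr.le] at hC
  rw [min_eq_left hsl] at hD
  -- Inclusion–exclusion for the rectangle `{s} × [1, y]`, on sets of lower-left type.
  have hU := measureReal_union_add_inter (μ := μ)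
    (s := {z : ℕ × ℕ | z.1 ≤ s - 1 ∧ z.2 ≤ y}) (t := {z : ℕ × ℕ | z.1 ≤ s ∧ z.2 ≤ 0})
    (Set.to_countable _).measurableSet
  have hI : {z : ℕ × ℕ | z.1 ≤ s - 1 ∧ z.2 ≤ y} ∩ {z : ℕ × ℕ | z.1 ≤ s ∧ z.2 ≤ 0}
      = {z : ℕ × ℕ | z.1 ≤ s - 1 ∧ z.2 ≤ 0} := by
    ext z
    simp only [Set.mem_inter_iff, Set.mem_ofPred_eq]
    omega
  have hsub : {z : ℕ × ℕ | z.1 ≤ s - 1 ∧ z.2 ≤ y} ∪ {z : ℕ × ℕ | z.1 ≤ s ∧ z.2 ≤ 0}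
      ⊆ {z : ℕ × ℕ | z.1 ≤ s ∧ z.2 ≤ y} := by
    intro z
    simp only [Set.mem_union, Set.mem_ofPred_eq]
    omega
  have hdiff := measureReal_sdiff (μ := μ) hsub (Set.to_countable _).measurableSet
  have hR : {z : ℕ × ℕ | z.1 ≤ s ∧ z.2 ≤ y} \
      ({z : ℕ × ℕ | z.1 ≤ s - 1 ∧ z.2 ≤ y} ∪ {z : ℕ × ℕ | z.1 ≤ s ∧ z.2 ≤ 0})
      = {z : ℕ × ℕ | z.1 = s ∧ 1 ≤ z.2 ∧ z.2 ≤ y} := by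
    ext z
    simp only [Set.mem_sdiff, Set.mem_union, Set.mem_ofPred_eq]
    omega
  rw [hI] at hU
  rw [hR] at hdiff
  simp only [measureReal_def] at hU hdiff
  linarith

end ZIS
end

section
/- Let μ be a probability measure on ℕ×ℕ with marginal CDFs F, G and suppose μ is countermonotone, i.e. μ({(a,b) : a ≤ x, b ≤ y}) = max(F(x) + G(y) − 1, 0) for all x,y ∈ ℕ. Set p₁ = F(0), p₂ = G(0) and assume p₁ + p₂ < 1. If s̃' ≥ 1 satisfies F(s̃'−1) ≤ 1 − p₂ < F(s̃'), then for every y ≥ 1, μ({(a,b) : a = s̃', 1 ≤ b ≤ y}) = G(y) − p₂ − max(F(s̃'−1) + G(y) − 1, 0). -/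
/-!
The section `{s} × [1, y]` is a rectangle, so its mass is an alternating sum of four values of the
joint CDF (`section_eq_corners`). The crossing condition decides the sign of the lower Fréchet bound
at three of the corners: it is positive at `(s, 0)`, hence at `(s, y)` by monotonicity of `G`, and it
vanishes at `(s - 1, 0)`. The term `F(s)` then cancels between the first two, and only the maximum
at `(s - 1, y)` remains.
-/

open MeasureTheory

namespace ZIS

/-- Inclusion–exclusion: the mass of `{n + 1} × [1, y] = (n, n + 1] × (0, y]` is the alternating
sum of the joint CDF over its corners. -/
theorem section_eq_corners (μ : Measure (ℕ × ℕ)) [IsFiniteMeasure μ] (n y : ℕ) :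
    μ.real {z : ℕ × ℕ | z.1 = n + 1 ∧ 1 ≤ z.2 ∧ z.2 ≤ y}
      = μ.real {z : ℕ × ℕ | z.1 ≤ n + 1 ∧ z.2 ≤ y} - μ.real {z : ℕ × ℕ | z.1 ≤ n ∧ z.2 ≤ y}
        - μ.real {z : ℕ × ℕ | z.1 ≤ n + 1 ∧ z.2 ≤ 0} + μ.real {z : ℕ × ℕ | z.1 ≤ n ∧ z.2 ≤ 0} := by
  have column (m : ℕ) : μ.real {z : ℕ × ℕ | z.1 ≤ n + 1 ∧ z.2 ≤ m}
      = μ.real {z : ℕ × ℕ | z.1 ≤ n ∧ z.2 ≤ m} + μ.real {z : ℕ × ℕ | z.1 = n + 1 ∧ z.2 ≤ m} := by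
    rw [← measureReal_union _ (Set.to_countable _).measurableSet]
    · congr 1
      ext z
      simp only [Set.mem_ofPred_eq, Set.mem_union]
      omega
    · rw [Set.disjoint_left]
      intro z hz hz'
      simp only [Set.mem_ofPred_eq] at hz hz'
      omega
  have row : μ.real {z : ℕ × ℕ | z.1 = n + 1 ∧ z.2 ≤ y}
      = μ.real {z : ℕ × ℕ | z.1 = n + 1 ∧ z.2 ≤ 0}
        + μ.real {z : ℕ × ℕ | z.1 = n + 1 ∧ 1 ≤ z.2 ∧ z.2 ≤ y} := by
    rw [← measureReal_union _ (Set.to_countable _).measurableSet]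
    · congr 1
      ext z
      simp only [Set.mem_ofPred_eq, Set.mem_union]
      omega
    · rw [Set.disjoint_left]
      intro z hz hz'
      simp only [Set.mem_ofPred_eq] at hz hz'
      omega
  linarith [column y, column 0]

/-- Under the countermonotone coupling with `p₁ + p₂ < 1` and crossing point `s̃'`:
`P(X = s̃', 0 < Y ≤ y) = G(y) − p₂ − max(F(s̃'−1) + G(y) − 1, 0)` for all `y ≥ 1`. -/
theorem countermonotone_section_at_crossing (μ : Measure (ℕ × ℕ)) [IsProbabilityMeasure μ]
    (hctm : Countermonotone μ) (p₁ p₂ : ℝ) (hp₁ : p₁ = F μ 0) (hp₂ : p₂ = G μ 0)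
    (hsum : p₁ + p₂ < 1)
    (s : ℕ) (hs : 1 ≤ s) (hsl : F μ (s - 1) ≤ 1 - p₂) (hsr : 1 - p₂ < F μ s) :
    ∀ y : ℕ, 1 ≤ y →
      (μ {z : ℕ × ℕ | z.1 = s ∧ 1 ≤ z.2 ∧ z.2 ≤ y}).toReal
        = G μ y - p₂ - max (F μ (s - 1) + G μ y - 1) 0 := by
  intro y _
  obtain ⟨n, rfl⟩ : ∃ n, s = n + 1 := ⟨s - 1, by omega⟩
  simp only [Nat.add_sub_cancel] at hsl ⊢
  have hG : G μ 0 ≤ G μ y :=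
    measureReal_mono (μ := μ) fun z (hz : z.2 ≤ 0) => show z.2 ≤ y by omega
  have h := section_eq_corners μ n y
  simp only [Measure.real, hctm _ _] at h
  subst hp₂
  rw [h, max_eq_left (by linarith : (0 : ℝ) ≤ F μ (n + 1) + G μ y - 1),
    max_eq_left (by linarith : (0 : ℝ) ≤ F μ (n + 1) + G μ 0 - 1),
    max_eq_right (by linarith : F μ n + G μ 0 - 1 ≤ (0 : ℝ))]
  ring

end ZIS
end

section
/- Let μ be a probability measure on ℕ×ℕ with marginal CDFs F, G and suppose μ is countermonotone, i.e. μ({(a,b) : a ≤ x, b ≤ y}) = max(F(x) + G(y) − 1, 0) for all x,y ∈ ℕ. If p₁ + p₂ ≥ 1, where p₁ = F(0) and p₂ = G(0), then Spearman's rho of μ equals ρ_S = −3·(1 − p₁)·(1 − p₂). -/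
/-!
Let `a x = E sign(x - X)` and `b y = E sign(y - Y)`. Conditioning on the first pair, which is
independent of the other two, gives `ρ_S = 3 E[a(X) b(Y)]` (`rhoS_eq_integral`). By antisymmetry of
the sign, `E a(X) = E b(Y) = 0` (`integral_meanSgn`), while `a 0 = -(1 - p₁)` and
`b 0 = -(1 - p₂)` (`meanSgn_zero`). When `p₁ + p₂ ≥ 1`, the countermonotone law puts no mass on
`X > 0, Y > 0` (`ae_eq_zero_or_eq_zero`), so `(a(X) - a 0) (b(Y) - b 0) = 0` almost surely.
Expanding and taking expectations, `E[a(X) b(Y)] = -a 0 * b 0 = -(1 - p₁) (1 - p₂)`.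
-/

open MeasureTheory

namespace ZIS

/-- The sign of `a - b` as a real number. -/
def sgnDiff (a b : ℕ) : ℝ := if b < a then 1 else if a < b then -1 else 0

lemma sgnDiff_swap (a b : ℕ) : sgnDiff b a = -sgnDiff a b := by
  unfold sgnDiff
  split_ifs <;> first | omega | simp

lemma abs_sgnDiff_le (a b : ℕ) : |sgnDiff a b| ≤ 1 := by
  unfold sgnDiff
  split_ifs <;> simp

lemma integrable_of_abs_le {α : Type*} [MeasurableSpace α] [DiscreteMeasurableSpace α]
    [Countable α] (ν : Measure α) [IsFiniteMeasure ν] {f : α → ℝ} {C : ℝ}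
    (hf : ∀ x, |f x| ≤ C) : Integrable f ν :=
  Integrable.of_bound (Measurable.of_discrete).aestronglyMeasurable C
    (Filter.Eventually.of_forall hf)

lemma integrable_indicator_one {α : Type*} [MeasurableSpace α] [DiscreteMeasurableSpace α]
    [Countable α] (ν : Measure α) [IsFiniteMeasure ν] (A : Set α) :
    Integrable (A.indicator (1 : α → ℝ)) ν :=
  (integrable_const (1 : ℝ)).indicator MeasurableSet.of_discrete

lemma indicator_conc_sub_disc (ω : Ω₃) :
    Conc.indicator (1 : Ω₃ → ℝ) ω - Disc.indicator (1 : Ω₃ → ℝ) ω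
      = sgnDiff (X₁ ω) (X₂ ω) * sgnDiff (Y₁ ω) (Y₃ ω) := by
  simp only [Set.indicator_apply, Conc, Disc, Set.mem_ofPred_eq, sgnDiff, Pi.one_apply]
  rcases lt_trichotomy (X₁ ω) (X₂ ω) with h | h | h <;>
  rcases lt_trichotomy (Y₁ ω) (Y₃ ω) with k | k | k <;>
  simp [h, k, h.not_gt, k.not_gt]

section

variable (μ : Measure (ℕ × ℕ)) [IsProbabilityMeasure μ]

/-- The expected sign of `a - f Z`, where `Z` has law `μ`. -/
noncomputable def meanSgn (f : ℕ × ℕ → ℕ) (a : ℕ) : ℝ := ∫ z, sgnDiff a (f z) ∂μ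

lemma abs_meanSgn_le (f : ℕ × ℕ → ℕ) (a : ℕ) : |meanSgn μ f a| ≤ 1 := by
  have h := norm_integral_le_of_norm_le_const (μ := μ) (f := fun z => sgnDiff a (f z)) (C := 1)
    (Filter.Eventually.of_forall fun z => abs_sgnDiff_le a (f z))
  simpa [meanSgn] using h

/-- Two independent copies are exchangeable and the sign is antisymmetric, so the mean vanishes. -/
lemma integral_meanSgn (f : ℕ × ℕ → ℕ) : ∫ z, meanSgn μ f (f z) ∂μ = 0 := by
  have hswap : ∫ z, ∫ z', sgnDiff (f z) (f z') ∂μ ∂μ = ∫ z', ∫ z, sgnDiff (f z) (f z') ∂μ ∂μ :=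
    integral_integral_swap (integrable_of_abs_le (μ.prod μ) fun p => abs_sgnDiff_le _ _)
  have hneg : ∫ z', ∫ z, sgnDiff (f z) (f z') ∂μ ∂μ
      = -∫ z', ∫ z, sgnDiff (f z') (f z) ∂μ ∂μ := by
    rw [← integral_neg]
    congr 1 with z'
    rw [← integral_neg]
    congr 1 with z
    exact sgnDiff_swap _ _
  simp only [meanSgn]
  linarith

lemma meanSgn_zero (f : ℕ × ℕ → ℕ) : meanSgn μ f 0 = -(1 - (μ {z | f z ≤ 0}).toReal) := by
  have h : ∀ z, sgnDiff 0 (f z) = ({z | f z ≤ 0} : Set (ℕ × ℕ)).indicator (1 : ℕ × ℕ → ℝ) z - 1 := by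
    intro z
    by_cases hz : f z = 0 <;> simp [sgnDiff, hz, Nat.pos_iff_ne_zero]
  rw [meanSgn, integral_congr_ae (Filter.Eventually.of_forall h), integral_sub
    (integrable_indicator_one μ _)
    (integrable_const _), integral_indicator_one (MeasurableSet.of_discrete)]
  simp [Measure.real]

/-- Spearman's rho is three times the expected product of the mean signs: given the first pair, the
second and third pairs are independent. -/
lemma rhoS_eq_integral_s10 :
    rhoS μ = 3 * ∫ z, meanSgn μ Prod.fst z.1 * meanSgn μ Prod.snd z.2 ∂μ := by
  have : IsProbabilityMeasure (triple μ) := by unfold triple; infer_instance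
  have hint : ∀ A : Set Ω₃, Integrable (A.indicator (1 : Ω₃ → ℝ)) (triple μ) := fun A =>
    integrable_indicator_one _ A
  have hPr : ∀ A : Set Ω₃, Pr μ A = ∫ ω, A.indicator (1 : Ω₃ → ℝ) ω ∂(triple μ) := fun A => by
    rw [integral_indicator_one (MeasurableSet.of_discrete)]; rfl
  rw [rhoS, ← mul_sub, hPr, hPr, ← integral_sub (hint _) (hint _)]
  simp only [indicator_conc_sub_disc]
  rw [triple, integral_prod]
  · congr 2 with z
    exact integral_prod_mul (μ := μ) (ν := μ) (fun z' => sgnDiff z.1 z'.1)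
      (fun z' => sgnDiff z.2 z'.2)
  · refine integrable_of_abs_le _ (C := 1) fun ω => ?_
    rw [abs_mul]
    exact mul_le_one₀ (abs_sgnDiff_le _ _) (abs_nonneg _) (abs_sgnDiff_le _ _)

/-- Under the lower Fréchet–Hoeffding bound with `p₁ + p₂ ≥ 1`, the event `X = 0, Y = 0` has mass
`p₁ + p₂ - 1`, so `X = 0` or `Y = 0` carries all the mass. -/
lemma ae_eq_zero_or_eq_zero (hctm : Countermonotone μ) (hsum : 1 ≤ F μ 0 + G μ 0) :
    ∀ᵐ z ∂μ, z.1 = 0 ∨ z.2 = 0 := by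
  have h := hctm 0 0
  rw [max_eq_left (by linarith)] at h
  have hadd := measureReal_union_add_inter (μ := μ) (s := {z : ℕ × ℕ | z.1 ≤ 0})
    (t := {z : ℕ × ℕ | z.2 ≤ 0}) MeasurableSet.of_discrete
  have hone : μ.real ({z : ℕ × ℕ | z.1 ≤ 0} ∪ {z | z.2 ≤ 0}) = 1 := by
    change _ + μ.real {z : ℕ × ℕ | z.1 ≤ 0 ∧ z.2 ≤ 0} = F μ 0 + G μ 0 at hadd
    change μ.real {z : ℕ × ℕ | z.1 ≤ 0 ∧ z.2 ≤ 0} = _ at h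
    linarith
  have hmem : ∀ᵐ z ∂μ, z ∈ ({z : ℕ × ℕ | z.1 ≤ 0} ∪ {z | z.2 ≤ 0}) := by
    refine (mem_ae_iff_prob_eq_one MeasurableSet.of_discrete).2 ?_
    rwa [Measure.real, ENNReal.toReal_eq_one_iff] at hone
  filter_upwards [hmem] with z hz
  simpa using hz

end

/-- Under the countermonotone coupling with `p₁ + p₂ ≥ 1`, Spearman's rho equals
`−3·(1 − p₁)·(1 − p₂)`. -/
theorem rhoS_countermonotone_large_mass (μ : Measure (ℕ × ℕ)) [IsProbabilityMeasure μ]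
    (hctm : Countermonotone μ) (p₁ p₂ : ℝ) (hp₁ : p₁ = F μ 0) (hp₂ : p₂ = G μ 0)
    (hsum : 1 ≤ p₁ + p₂) :
    rhoS μ = -3 * (1 - p₁) * (1 - p₂) := by
  rw [rhoS_eq_integral_s10]
  set a : ℕ → ℝ := meanSgn μ Prod.fst
  set b : ℕ → ℝ := meanSgn μ Prod.snd
  have ha : a 0 = -(1 - p₁) := hp₁ ▸ meanSgn_zero μ Prod.fst
  have hb : b 0 = -(1 - p₂) := hp₂ ▸ meanSgn_zero μ Prod.snd
  -- `(a X - a 0) * (b Y - b 0) = 0` almost surely, because `X = 0` or `Y = 0`.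
  have hae : (fun z : ℕ × ℕ => a z.1 * b z.2)
      =ᵐ[μ] fun z => a 0 * b z.2 + b 0 * a z.1 - a 0 * b 0 := by
    filter_upwards [ae_eq_zero_or_eq_zero μ hctm (by rw [← hp₁, ← hp₂]; exact hsum)] with z hz
    rcases hz with hz | hz <;> rw [hz] <;> ring
  have hia : Integrable (fun z : ℕ × ℕ => b 0 * a z.1) μ :=
    (integrable_of_abs_le μ fun z => abs_meanSgn_le μ Prod.fst z.1).const_mul _
  have hib : Integrable (fun z : ℕ × ℕ => a 0 * b z.2) μ :=
    (integrable_of_abs_le μ fun z => abs_meanSgn_le μ Prod.snd z.2).const_mul _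
  have hia₀ : ∫ z, a z.1 ∂μ = 0 := integral_meanSgn μ Prod.fst
  have hib₀ : ∫ z, b z.2 ∂μ = 0 := integral_meanSgn μ Prod.snd
  rw [integral_congr_ae hae, integral_sub (by exact hib.add hia) (integrable_const _),
    integral_add hib hia, integral_const_mul, integral_const_mul, hia₀, hib₀, ha, hb]
  simp
  ring

end ZIS
end

section
/- Let μ be a probability measure on ℕ×ℕ with marginal CDFs F, G and suppose μ is comonotone, i.e. μ({(a,b) : a ≤ x, b ≤ y}) = min(F(x), G(y)) for all x,y ∈ ℕ. Assume p₁ = F(0) < p₂ = G(0) < 1, let s̃ ≥ 1 satisfy F(s̃−1) ≤ p₂ < F(s̃), and let ũ ≥ 1 satisfy G(ũ−1) < F(s̃) ≤ G(ũ). Let (X₁,Y₁), (X₂,Y₂), (X₃,Y₃) be independent with law μ. Then (1−p₂)²·(p₂−p₁)·ρ_{S₁₀} = 3·(1−p₂)·(F(s̃)−p₂)·(p₂−F(s̃−1)) − 3·(p₂−F(s̃−1))·( p₂² − G(ũ)·G(ũ−1) + F(s̃)·(G(ũ) + G(ũ−1) − 2p₂) ). -/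
/-!
Write `A = {X > 0, Y > 0}` and `B = {X > 0, Y = 0}`. Comonotonicity says that two sublevel sets
`{X ≤ x}` and `{Y ≤ y}` are always nested up to a null set, the one of smaller probability inside
the other (`ae_le_of_F_le_G`, `ae_le_of_G_le_F`). Hence, almost surely, `Y = 0 → X ≤ s` and
`Y > 0 → X ≥ s`. On `S10` the first and third pairs lie in `A` and the second in `B`, so `X₂ ≤ X₁`,
with equality only when `X₁ = X₂ = s`.

* If `X₂ < s`, the event is symmetric in the pairs 1 and 3, so concordance and discordance cancel.
* If `X₂ = s` (probability `p₂ - F (s - 1)`), then `X₁ > s` is needed. The part with `X₃ > s`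
  cancels by the same symmetry. If `X₃ ≤ s < X₁`, then `Y₃ ≤ u ≤ Y₁`, so discordance is impossible,
  and concordance fails only when `Y₁ = Y₃ = u`; this leaves
  `(1 - F s) (F s - p₂) - (G u - F s) (F s - G (u - 1))`.

Since `P(S10) = (1 - p₂)² (p₂ - p₁) ≠ 0`, the prefactor in the theorem cancels the conditioning.
The remaining identity is algebra.
-/


open MeasureTheory

namespace ZIS

/-- The mass of an event that splits almost surely into two disjoint events. -/
lemma real_add_of_ae {α : Type*} [MeasurableSpace α] [DiscreteMeasurableSpace α]
    (ν : Measure α) [IsFiniteMeasure ν] {P Q R : α → Prop}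
    (h : ∀ᵐ z ∂ν, (P z ↔ Q z ∨ R z) ∧ ¬(Q z ∧ R z)) :
    ν.real {z | P z} = ν.real {z | Q z} + ν.real {z | R z} := by
  have h1 : ν.real {z | P z} = ν.real ({z | Q z} ∪ {z | R z}) := by
    apply measureReal_congr
    filter_upwards [h] with z hz
    exact propext hz.1
  have h2 : ν.real ({z | Q z} ∩ {z | R z}) = 0 := by
    rw [measureReal_eq_zero_iff]
    exact measure_eq_zero_iff_ae_notMem.2 (h.mono fun z hz => hz.2)
  have h3 := measureReal_union_add_inter (μ := ν) (s := {z | Q z})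
    (t := {z | R z}) (MeasurableSet.of_discrete)
  rw [h1]
  linarith

lemma ae_le_of_F_le_G (μ : Measure (ℕ × ℕ)) [IsProbabilityMeasure μ] (hcom : Comonotone μ)
    {x y : ℕ} (h : F μ x ≤ G μ y) : ∀ᵐ z ∂μ, z.1 ≤ x → z.2 ≤ y := by
  have h1 : μ.real {z : ℕ × ℕ | z.1 ≤ x} = μ.real {z : ℕ × ℕ | z.1 ≤ x ∧ z.2 ≤ y}
      + μ.real {z : ℕ × ℕ | z.1 ≤ x ∧ ¬ z.2 ≤ y} :=
    real_add_of_ae μ (Filter.Eventually.of_forall fun z => by tauto)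
  have h2 : μ.real {z : ℕ × ℕ | z.1 ≤ x ∧ z.2 ≤ y} = F μ x := by
    rw [← min_eq_left h]; exact hcom x y
  have h3 : μ.real {z : ℕ × ℕ | z.1 ≤ x} = F μ x := rfl
  have h4 : μ.real {z : ℕ × ℕ | z.1 ≤ x ∧ ¬ z.2 ≤ y} = 0 := by linarith
  rw [measureReal_eq_zero_iff] at h4
  filter_upwards [measure_eq_zero_iff_ae_notMem.1 h4] with z hz hx
  by_contra hy
  exact hz ⟨hx, hy⟩

lemma ae_le_of_G_le_F (μ : Measure (ℕ × ℕ)) [IsProbabilityMeasure μ] (hcom : Comonotone μ)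
    {x y : ℕ} (h : G μ y ≤ F μ x) : ∀ᵐ z ∂μ, z.2 ≤ y → z.1 ≤ x := by
  have h1 : μ.real {z : ℕ × ℕ | z.2 ≤ y} = μ.real {z : ℕ × ℕ | z.1 ≤ x ∧ z.2 ≤ y}
      + μ.real {z : ℕ × ℕ | z.2 ≤ y ∧ ¬ z.1 ≤ x} :=
    real_add_of_ae μ (Filter.Eventually.of_forall fun z => by tauto)
  have h2 : μ.real {z : ℕ × ℕ | z.1 ≤ x ∧ z.2 ≤ y} = G μ y := by
    rw [← min_eq_right h]; exact hcom x y
  have h3 : μ.real {z : ℕ × ℕ | z.2 ≤ y} = G μ y := rfl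
  have h4 : μ.real {z : ℕ × ℕ | z.2 ≤ y ∧ ¬ z.1 ≤ x} = 0 := by linarith
  rw [measureReal_eq_zero_iff] at h4
  filter_upwards [measure_eq_zero_iff_ae_notMem.1 h4] with z hz hy
  by_contra hx
  exact hz ⟨hy, hx⟩

/-- The second pair is independent of the first and third pairs together. -/
lemma Pr_mid (μ : Measure (ℕ × ℕ)) [IsProbabilityMeasure μ] (P : ℕ × ℕ → Prop)
    (Q : (ℕ × ℕ) × (ℕ × ℕ) → Prop) :
    (triple μ).real {ω | P ω.2.1 ∧ Q (ω.1, ω.2.2)}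
      = μ.real {z | P z} * (μ.prod μ).real {p | Q p} := by
  simp only [Measure.real, ← ENNReal.toReal_mul]
  congr 1
  rw [triple, Measure.prod_apply MeasurableSet.of_discrete,
    Measure.prod_apply MeasurableSet.of_discrete,
    ← lintegral_const_mul _ (measurable_of_countable _)]
  refine lintegral_congr fun z => ?_
  rw [← Measure.prod_prod]
  rfl

/-- Exchangeability of two independent pairs. -/
lemma real_swap (μ : Measure (ℕ × ℕ)) [IsProbabilityMeasure μ]
    (Q : (ℕ × ℕ) → (ℕ × ℕ) → Prop) :
    (μ.prod μ).real {p | Q p.2 p.1} = (μ.prod μ).real {p | Q p.1 p.2} := by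
  have h := (Measure.measurePreserving_swap (μ := μ) (ν := μ)).measure_preimage
    (s := {p | Q p.1 p.2}) MeasurableSet.of_discrete.nullMeasurableSet
  exact congrArg ENNReal.toReal h

/-- Value of `p₁₁²·p₁₀·ρ_{S₁₀}` under the comonotone coupling. -/
theorem rhoS10_comonotone (μ : Measure (ℕ × ℕ)) [IsProbabilityMeasure μ]
    (hcom : Comonotone μ) (p₁ p₂ : ℝ) (hp₁ : p₁ = F μ 0) (hp₂ : p₂ = G μ 0)
    (h12 : p₁ < p₂) (h2 : p₂ < 1)
    (s : ℕ) (hs : 1 ≤ s) (hsl : F μ (s - 1) ≤ p₂) (hsr : p₂ < F μ s)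
    (u : ℕ) (hu : 1 ≤ u) (hul : G μ (u - 1) < F μ s) (hur : F μ s ≤ G μ u) :
    (1 - p₂) ^ 2 * (p₂ - p₁) * rhoCond μ S10
      = 3 * (1 - p₂) * (F μ s - p₂) * (p₂ - F μ (s - 1))
        - 3 * (p₂ - F μ (s - 1))
          * (p₂ ^ 2 - G μ u * G μ (u - 1) + F μ s * (G μ u + G μ (u - 1) - 2 * p₂)) := by
  subst hp₁ hp₂
  -- The almost sure constraints on a single pair.
  have good : ∀ᵐ z ∂μ, (z.2 = 0 → z.1 ≤ s) ∧ (0 < z.2 → s ≤ z.1) ∧ (z.1 = 0 → z.2 = 0) ∧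
      (z.2 < u → z.1 ≤ s) ∧ (z.1 ≤ s → z.2 ≤ u) := by
    filter_upwards [ae_le_of_G_le_F μ hcom hsr.le, ae_le_of_F_le_G μ hcom hsl,
      ae_le_of_F_le_G μ hcom h12.le, ae_le_of_G_le_F μ hcom hul.le,
      ae_le_of_F_le_G μ hcom hur] with z a b c d e
    refine ⟨?_, ?_, ?_, ?_, e⟩ <;> omega
  have good2 := (Measure.quasiMeasurePreserving_fst (μ := μ) (ν := μ)).ae good
  have good2' := (Measure.quasiMeasurePreserving_snd (μ := μ) (ν := μ)).ae good
  have good3 : ∀ᵐ ω ∂(triple μ), _ :=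
    (Measure.quasiMeasurePreserving_fst (μ := μ) (ν := μ.prod μ)).ae good
  have good3' : ∀ᵐ ω ∂(triple μ), _ :=
    (Measure.quasiMeasurePreserving_snd (μ := μ) (ν := μ.prod μ)).ae good2
  have good3'' : ∀ᵐ ω ∂(triple μ), _ :=
    (Measure.quasiMeasurePreserving_snd (μ := μ) (ν := μ.prod μ)).ae good2'
  have : IsProbabilityMeasure (triple μ) := by unfold triple; infer_instance
  have hF : ∀ x, μ.real {z : ℕ × ℕ | z.1 ≤ x} = F μ x := fun _ => rfl
  have hG : ∀ y, μ.real {z : ℕ × ℕ | z.2 ≤ y} = G μ y := fun _ => rfl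
  have huniv : μ.real {z : ℕ × ℕ | True} = 1 := by simp
  have m11 : μ.real {z : ℕ × ℕ | True} = μ.real {z : ℕ × ℕ | z.2 ≤ 0}
      + μ.real {z : ℕ × ℕ | 0 < z.1 ∧ 0 < z.2} :=
    real_add_of_ae μ (good.mono fun z hz => by simp only [true_iff]; omega)
  have m10 : μ.real {z : ℕ × ℕ | z.2 ≤ 0} = μ.real {z : ℕ × ℕ | z.1 ≤ 0}
      + μ.real {z : ℕ × ℕ | 0 < z.1 ∧ z.2 = 0} :=
    real_add_of_ae μ (good.mono fun z hz => by omega)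
  have mBs : μ.real {z : ℕ × ℕ | z.2 ≤ 0} = μ.real {z : ℕ × ℕ | z.1 ≤ s - 1}
      + μ.real {z : ℕ × ℕ | z.1 = s ∧ z.2 = 0} :=
    real_add_of_ae μ (by
      filter_upwards [good, ae_le_of_F_le_G μ hcom hsl] with z hz hz'
      omega)
  have mT : μ.real {z : ℕ × ℕ | True} = μ.real {z : ℕ × ℕ | z.1 ≤ s}
      + μ.real {z : ℕ × ℕ | s < z.1} :=
    real_add_of_ae μ (good.mono fun z hz => by simp only [true_iff]; omega)
  have mA : μ.real {z : ℕ × ℕ | z.1 ≤ s} = μ.real {z : ℕ × ℕ | z.2 ≤ 0}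
      + μ.real {z : ℕ × ℕ | z.1 ≤ s ∧ 0 < z.2} :=
    real_add_of_ae μ (good.mono fun z hz => by omega)
  have mA2 : μ.real {z : ℕ × ℕ | z.1 ≤ s} = μ.real {z : ℕ × ℕ | z.2 ≤ u - 1}
      + μ.real {z : ℕ × ℕ | z.1 ≤ s ∧ z.2 = u} :=
    real_add_of_ae μ (good.mono fun z hz => by omega)
  have mA3 : μ.real {z : ℕ × ℕ | z.2 ≤ u} = μ.real {z : ℕ × ℕ | z.1 ≤ s}
      + μ.real {z : ℕ × ℕ | s < z.1 ∧ z.2 = u} :=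
    real_add_of_ae μ (good.mono fun z hz => by omega)
  rw [hG, huniv] at m11
  rw [hF, hG] at m10 mBs mA mA2 mA3
  rw [hF, huniv] at mT
  have hS : Pr μ S10 = (1 - G μ 0) ^ 2 * (G μ 0 - F μ 0) := by
    have e1 : Pr μ S10 = (triple μ).real {ω | (0 < ω.2.1.1 ∧ ω.2.1.2 = 0) ∧
        ((0 < (ω.1, ω.2.2).1.1 ∧ 0 < (ω.1, ω.2.2).1.2) ∧
          (0 < (ω.1, ω.2.2).2.1 ∧ 0 < (ω.1, ω.2.2).2.2))} := by
      change (triple μ).real S10 = _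
      congr 1
      ext ω
      simp only [S10, Sstar, X₁, X₂, X₃, Y₁, Y₂, Y₃, Set.mem_inter_iff, Set.mem_ofPred_eq]
      tauto
    have e2 := Pr_mid μ (fun z => 0 < z.1 ∧ z.2 = 0)
      (fun p => (0 < p.1.1 ∧ 0 < p.1.2) ∧ (0 < p.2.1 ∧ 0 < p.2.2))
    have e3 := measureReal_prod_prod (μ := μ) (ν := μ) {z : ℕ × ℕ | 0 < z.1 ∧ 0 < z.2}
      {z : ℕ × ℕ | 0 < z.1 ∧ 0 < z.2}
    change (μ.prod μ).real {p : (ℕ × ℕ) × (ℕ × ℕ) |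
      (0 < p.1.1 ∧ 0 < p.1.2) ∧ (0 < p.2.1 ∧ 0 < p.2.2)} = _ at e3
    have r11 := eq_sub_of_add_eq' m11.symm
    have r10 := eq_sub_of_add_eq' m10.symm
    rw [e1, e2, e3, r11, r10]
    ring
  -- Split according to whether `X₂ < s` or `X₂ = s`.
  have hC : Pr μ (Conc ∩ S10) = (triple μ).real {ω | (0 < ω.2.1.1 ∧ ω.2.1.1 < s ∧ ω.2.1.2 = 0) ∧
        (0 < ω.1.2 ∧ 0 < ω.2.2.2 ∧ ω.2.2.2 < ω.1.2)}
      + (triple μ).real {ω | (ω.2.1.1 = s ∧ ω.2.1.2 = 0) ∧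
        (s < ω.1.1 ∧ 0 < ω.2.2.2 ∧ ω.2.2.2 < ω.1.2)} := by
    refine real_add_of_ae (triple μ) ?_
    filter_upwards [good3, good3', good3''] with ω a b c
    change (ω ∈ Conc ∩ S10 ↔ _) ∧ _
    simp only [Conc, S10, Sstar, X₁, X₂, X₃, Y₁, Y₂, Y₃, Set.mem_inter_iff, Set.mem_ofPred_eq]
    omega
  have hD : Pr μ (Disc ∩ S10) = (triple μ).real {ω | (0 < ω.2.1.1 ∧ ω.2.1.1 < s ∧ ω.2.1.2 = 0) ∧
        (0 < ω.2.2.2 ∧ 0 < ω.1.2 ∧ ω.1.2 < ω.2.2.2)}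
      + (triple μ).real {ω | (ω.2.1.1 = s ∧ ω.2.1.2 = 0) ∧
        (s < ω.2.2.1 ∧ s < ω.1.1 ∧ ω.1.2 < ω.2.2.2)} := by
    refine real_add_of_ae (triple μ) ?_
    filter_upwards [good3, good3', good3''] with ω a b c
    change (ω ∈ Disc ∩ S10 ↔ _) ∧ _
    simp only [Disc, S10, Sstar, X₁, X₂, X₃, Y₁, Y₂, Y₃, Set.mem_inter_iff, Set.mem_ofPred_eq]
    omega
  have c0 := Pr_mid μ (fun z => 0 < z.1 ∧ z.1 < s ∧ z.2 = 0)
    (fun p => 0 < p.1.2 ∧ 0 < p.2.2 ∧ p.2.2 < p.1.2)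
  have c1 := Pr_mid μ (fun z => z.1 = s ∧ z.2 = 0)
    (fun p => s < p.1.1 ∧ 0 < p.2.2 ∧ p.2.2 < p.1.2)
  have d0 := Pr_mid μ (fun z => 0 < z.1 ∧ z.1 < s ∧ z.2 = 0)
    (fun p => 0 < p.2.2 ∧ 0 < p.1.2 ∧ p.1.2 < p.2.2)
  have d1 := Pr_mid μ (fun z => z.1 = s ∧ z.2 = 0)
    (fun p => s < p.2.1 ∧ s < p.1.1 ∧ p.1.2 < p.2.2)
  have sw0 := real_swap μ (fun a b => 0 < a.2 ∧ 0 < b.2 ∧ b.2 < a.2)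
  have sw1 := real_swap μ (fun a b => s < a.1 ∧ s < b.1 ∧ b.2 < a.2)
  -- Split according to whether `X₃ > s` or `X₃ ≤ s`.
  have hE : (μ.prod μ).real {p | s < p.1.1 ∧ 0 < p.2.2 ∧ p.2.2 < p.1.2}
      = (μ.prod μ).real {p | s < p.1.1 ∧ s < p.2.1 ∧ p.2.2 < p.1.2}
      + (μ.prod μ).real {p | s < p.1.1 ∧ (p.2.1 ≤ s ∧ 0 < p.2.2) ∧ p.2.2 < p.1.2} := by
    refine real_add_of_ae _ ?_
    filter_upwards [good2, good2'] with p a b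
    omega
  -- If `X₃ ≤ s < X₁` then `Y₃ ≤ u ≤ Y₁`, so a tie means `Y₁ = Y₃ = u`.
  have hH : (μ.prod μ).real {p | s < p.1.1 ∧ (p.2.1 ≤ s ∧ 0 < p.2.2)}
      = (μ.prod μ).real {p | s < p.1.1 ∧ (p.2.1 ≤ s ∧ 0 < p.2.2) ∧ p.2.2 < p.1.2}
      + (μ.prod μ).real {p | (s < p.1.1 ∧ p.1.2 = u) ∧ (p.2.1 ≤ s ∧ p.2.2 = u)} := by
    refine real_add_of_ae _ ?_
    filter_upwards [good2, good2'] with p a b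
    omega
  have q1 : (μ.prod μ).real {p | s < p.1.1 ∧ (p.2.1 ≤ s ∧ 0 < p.2.2)} = _ :=
    measureReal_prod_prod (μ := μ) (ν := μ) {z : ℕ × ℕ | s < z.1} {z : ℕ × ℕ | z.1 ≤ s ∧ 0 < z.2}
  have q2 : (μ.prod μ).real {p | (s < p.1.1 ∧ p.1.2 = u) ∧ (p.2.1 ≤ s ∧ p.2.2 = u)} = _ :=
    measureReal_prod_prod (μ := μ) (ν := μ) {z : ℕ × ℕ | s < z.1 ∧ z.2 = u}
      {z : ℕ × ℕ | z.1 ≤ s ∧ z.2 = u}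
  have hdiff : Pr μ (Conc ∩ S10) - Pr μ (Disc ∩ S10) = (G μ 0 - F μ (s - 1)) *
      ((1 - F μ s) * (F μ s - G μ 0) - (G μ u - F μ s) * (F μ s - G μ (u - 1))) := by
    rw [eq_sub_of_add_eq' mT.symm, eq_sub_of_add_eq' mA.symm] at q1
    rw [eq_sub_of_add_eq' mA3.symm, eq_sub_of_add_eq' mA2.symm] at q2
    rw [q1, q2] at hH
    rw [eq_sub_of_add_eq' mBs.symm] at c1 d1
    rw [hC, hD, c0, c1, d0, d1, sw0, sw1, hE]
    linear_combination (-(G μ 0 - F μ (s - 1))) * hH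
  have hne : (1 - G μ 0) ^ 2 * (G μ 0 - F μ 0) ≠ 0 :=
    mul_ne_zero (pow_ne_zero _ (by linarith)) (by linarith)
  have hcancel : (1 - G μ 0) ^ 2 * (G μ 0 - F μ 0) * rhoCond μ S10
      = 3 * (Pr μ (Conc ∩ S10) - Pr μ (Disc ∩ S10)) := by
    rw [rhoCond, cPr, cPr, hS, mul_sub, mul_left_comm, mul_left_comm _ 3,
      mul_div_cancel₀ _ hne, mul_div_cancel₀ _ hne, mul_sub]
  rw [hcancel, hdiff]
  ring

end ZIS
end

section
/- Let μ be a probability measure on ℕ×ℕ with marginal CDFs F, G and suppose μ is countermonotone, i.e. μ({(a,b) : a ≤ x, b ≤ y}) = max(F(x) + G(y) − 1, 0) for all x,y ∈ ℕ. Assume p₁ + p₂ < 1, where p₁ = F(0), p₂ = G(0), and let t̃' ≥ 1 satisfy G(t̃'−1) ≤ 1−p₁ < G(t̃'). Then for every y with 1 ≤ y < t̃', μ({(a,b) : a ≥ 1, 1 ≤ b ≤ y}) = G(y) − p₂, and for every y ≥ t̃', μ({(a,b) : a ≥ 1, 1 ≤ b ≤ y}) = 1 − p₁ − p₂. -/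
/-! Write `H` for the joint CDF. The event `{X ≥ 1, 1 ≤ Y ≤ y}` is `{Y ≤ y}` with
`{Y ≤ 0} ∪ {X ≤ 0, Y ≤ y}` removed, so by inclusion–exclusion its mass is
`G(y) - G(0) - H(0, y) + H(0, 0)` (`positive_rectangle_mass`). For the countermonotone law
`H(0, 0) = 0`, because `p₁ + p₂ < 1`, and `H(0, y) = max(p₁ + G(y) - 1, 0)`. Since `G` is
monotone, the choice of `t` makes this maximum `0` for `y < t` and `p₁ + G(y) - 1` for `t ≤ y`. -/

open MeasureTheory

namespace ZIS

theorem G_mono (μ : Measure (ℕ × ℕ)) [IsProbabilityMeasure μ] : Monotone (G μ) :=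
  fun _ _ hab => measureReal_mono (μ := μ) fun _ hz => le_trans hz hab

theorem positive_rectangle_mass (μ : Measure (ℕ × ℕ)) [IsProbabilityMeasure μ] (y : ℕ) :
    (μ {z : ℕ × ℕ | 1 ≤ z.1 ∧ 1 ≤ z.2 ∧ z.2 ≤ y}).toReal
      = G μ y - G μ 0 - (μ {z : ℕ × ℕ | z.1 ≤ 0 ∧ z.2 ≤ y}).toReal
        + (μ {z : ℕ × ℕ | z.1 ≤ 0 ∧ z.2 ≤ 0}).toReal := by
  have h₁ := measureReal_union_add_inter (μ := μ) (s := {z : ℕ × ℕ | z.2 ≤ 0})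
    (t := {z : ℕ × ℕ | z.1 ≤ 0 ∧ z.2 ≤ y}) (Set.to_countable _).measurableSet
  have h₂ := measureReal_union (μ := μ) (s₁ := {z : ℕ × ℕ | 1 ≤ z.1 ∧ 1 ≤ z.2 ∧ z.2 ≤ y})
    (s₂ := {z : ℕ × ℕ | z.2 ≤ 0} ∪ {z : ℕ × ℕ | z.1 ≤ 0 ∧ z.2 ≤ y})
    (Set.disjoint_left.2 fun z h h' => by
      simp only [Set.mem_union, Set.mem_ofPred_eq] at h h'; omega)
    (Set.to_countable _).measurableSet
  have e₁ : {z : ℕ × ℕ | z.2 ≤ 0} ∩ {z : ℕ × ℕ | z.1 ≤ 0 ∧ z.2 ≤ y}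
      = {z : ℕ × ℕ | z.1 ≤ 0 ∧ z.2 ≤ 0} := by
    ext z; simp only [Set.mem_inter_iff, Set.mem_ofPred_eq]; omega
  have e₂ : {z : ℕ × ℕ | 1 ≤ z.1 ∧ 1 ≤ z.2 ∧ z.2 ≤ y}
      ∪ ({z : ℕ × ℕ | z.2 ≤ 0} ∪ {z : ℕ × ℕ | z.1 ≤ 0 ∧ z.2 ≤ y}) = {z : ℕ × ℕ | z.2 ≤ y} := by
    ext z; simp only [Set.mem_union, Set.mem_ofPred_eq]; omega
  rw [e₁] at h₁
  rw [e₂] at h₂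
  simp only [Measure.real] at h₁ h₂
  unfold G
  linarith

/-- Under the countermonotone coupling with `p₁ + p₂ < 1` and crossing point `t̃'`:
`P(X > 0, 0 < Y ≤ y) = G(y) − p₂` for `1 ≤ y < t̃'`, and `= 1 − p₁ − p₂` for `y ≥ t̃'`. -/
theorem countermonotone_Y11_cdf (μ : Measure (ℕ × ℕ)) [IsProbabilityMeasure μ]
    (hctm : Countermonotone μ) (p₁ p₂ : ℝ) (hp₁ : p₁ = F μ 0) (hp₂ : p₂ = G μ 0)
    (hsum : p₁ + p₂ < 1)
    (t : ℕ) (ht : 1 ≤ t) (htl : G μ (t - 1) ≤ 1 - p₁) (htr : 1 - p₁ < G μ t) :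
    (∀ y : ℕ, 1 ≤ y → y < t →
        (μ {z : ℕ × ℕ | 1 ≤ z.1 ∧ 1 ≤ z.2 ∧ z.2 ≤ y}).toReal = G μ y - p₂)
    ∧ (∀ y : ℕ, t ≤ y →
        (μ {z : ℕ × ℕ | 1 ≤ z.1 ∧ 1 ≤ z.2 ∧ z.2 ≤ y}).toReal = 1 - p₁ - p₂) := by
  subst hp₁ hp₂
  have h₀ := hctm 0 0
  rw [max_eq_right (by linarith)] at h₀
  refine ⟨fun y _ hyt => ?_, fun y hty => ?_⟩
  · have hG : G μ y ≤ G μ (t - 1) := G_mono μ (by omega)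
    rw [positive_rectangle_mass, h₀, hctm 0 y, max_eq_right (by linarith)]
    ring
  · have hG : G μ t ≤ G μ y := G_mono μ hty
    rw [positive_rectangle_mass, h₀, hctm 0 y, max_eq_left (by linarith)]
    ring

end ZIS
end

section
/- Let μ be a probability measure on ℕ×ℕ with marginal CDFs F, G and suppose μ is countermonotone, i.e. μ({(a,b) : a ≤ x, b ≤ y}) = max(F(x) + G(y) − 1, 0) for all x,y ∈ ℕ. Assume 0 < p₁, 0 < p₂ and p₁ + p₂ < 1, where p₁ = F(0), p₂ = G(0). Let (X₁,Y₁), (X₂,Y₂), (X₃,Y₃) be independent with law μ and let S₀₀ = {X₁>0, Y₁>0, X₂>0, Y₃>0, X₃=0, Y₂=0}. Then P(X₁ > X₂ | S₀₀) = 0 and P(Y₁ > Y₃ | S₀₀) = 0; consequently ρ_{S₀₀} = 3·P(X₁ < X₂, Y₁ < Y₃ | S₀₀). -/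
/-!
Under the countermonotone coupling, for every `(c, d)` at least one of the quadrants
`{X ≤ c, Y ≤ d}` and `{X > c, Y > d}` is null (`Countermonotone.quadrant_null`): by
inclusion–exclusion, `P(X > c, Y > d) = 1 - F(c) - G(d) + P(X ≤ c, Y ≤ d)`, and this vanishes
as soon as `P(X ≤ c, Y ≤ d) = max (F(c) + G(d) - 1) 0` is positive. Hence, almost surely, an
independent copy of the pair never lies strictly below the first one in both coordinates
(`triple_fst_gt_snd`, `triple_fst_gt_thd`).

On `S₀₀` we have `Y₂ = 0 < Y₁`, so `X₂ < X₁` would place the second pair strictly below the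
first; and `X₃ = 0 < X₁`, so `Y₃ < Y₁` would place the third pair strictly below the first. Both
events are therefore null on `S₀₀`. The discordance event is contained in their union, and the
concordance event differs from `{X₁ < X₂, Y₁ < Y₃}` only inside it.
-/

open MeasureTheory

namespace ZIS

/-- A countermonotone law charges at most one of any two opposite (lower-left and upper-right)
quadrants. -/
lemma Countermonotone.quadrant_null {μ : Measure (ℕ × ℕ)} [IsProbabilityMeasure μ]
    (h : Countermonotone μ) (c d : ℕ) :
    μ {z : ℕ × ℕ | c < z.1 ∧ d < z.2} = 0 ∨ μ {z : ℕ × ℕ | z.1 ≤ c ∧ z.2 ≤ d} = 0 := by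
  have hcd : μ.real ({z : ℕ × ℕ | z.1 ≤ c} ∩ {z | z.2 ≤ d})
      = max (μ.real {z : ℕ × ℕ | z.1 ≤ c} + μ.real {z : ℕ × ℕ | z.2 ≤ d} - 1) 0 := h c d
  have hie := measureReal_union_add_inter (μ := μ) (s := {z : ℕ × ℕ | z.1 ≤ c})
    (t := {z : ℕ × ℕ | z.2 ≤ d}) (Set.to_countable _).measurableSet
  have hc := probReal_compl_eq_one_sub (μ := μ)
    (s := {z : ℕ × ℕ | z.1 ≤ c} ∪ {z | z.2 ≤ d}) (Set.to_countable _).measurableSet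
  have hq : ({z : ℕ × ℕ | z.1 ≤ c} ∪ {z | z.2 ≤ d})ᶜ = {z : ℕ × ℕ | c < z.1 ∧ d < z.2} := by
    ext z; simp
  rw [hq] at hc
  rcases max_choice (μ.real {z : ℕ × ℕ | z.1 ≤ c} + μ.real {z : ℕ × ℕ | z.2 ≤ d} - 1) 0
    with hm | hm
  · left
    rw [← measureReal_eq_zero_iff]
    linarith
  · right
    rw [hm] at hcd
    exact (measureReal_eq_zero_iff).1 hcd

/-- Almost surely, the second pair is not strictly below the first in both coordinates. -/
lemma triple_fst_gt_snd {μ : Measure (ℕ × ℕ)} [IsProbabilityMeasure μ]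
    (h : Countermonotone μ) : triple μ {ω | X₂ ω < X₁ ω ∧ Y₂ ω < Y₁ ω} = 0 := by
  -- Separate the two pairs by the corner `(c, d) = (X₂, Y₂)`.
  refine measure_mono_null (t := ⋃ p : ℕ × ℕ, {z : ℕ × ℕ | p.1 < z.1 ∧ p.2 < z.2} ×ˢ
    ({z : ℕ × ℕ | z.1 ≤ p.1 ∧ z.2 ≤ p.2} ×ˢ Set.univ)) ?_ ?_
  · intro ω hω
    exact Set.mem_iUnion.2 ⟨ω.2.1, hω, ⟨le_rfl, le_rfl⟩, trivial⟩
  · refine measure_iUnion_null fun p => ?_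
    rw [triple, Measure.prod_prod, Measure.prod_prod]
    rcases h.quadrant_null p.1 p.2 with h0 | h0 <;> simp [h0]

/-- Almost surely, the third pair is not strictly below the first in both coordinates. -/
lemma triple_fst_gt_thd {μ : Measure (ℕ × ℕ)} [IsProbabilityMeasure μ]
    (h : Countermonotone μ) : triple μ {ω | X₃ ω < X₁ ω ∧ Y₃ ω < Y₁ ω} = 0 := by
  -- Separate the two pairs by the corner `(c, d) = (X₃, Y₃)`.
  refine measure_mono_null (t := ⋃ p : ℕ × ℕ, {z : ℕ × ℕ | p.1 < z.1 ∧ p.2 < z.2} ×ˢ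
    (Set.univ ×ˢ {z : ℕ × ℕ | z.1 ≤ p.1 ∧ z.2 ≤ p.2})) ?_ ?_
  · intro ω hω
    exact Set.mem_iUnion.2 ⟨ω.2.2, hω, trivial, le_rfl, le_rfl⟩
  · refine measure_iUnion_null fun p => ?_
    rw [triple, Measure.prod_prod, Measure.prod_prod]
    rcases h.quadrant_null p.1 p.2 with h0 | h0 <;> simp [h0]

lemma cPr_eq_zero {μ : Measure (ℕ × ℕ)} {A B : Set Ω₃} (h : triple μ (A ∩ B) = 0) :
    cPr μ A B = 0 := by
  simp [cPr, Pr, h]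

/-- Under the countermonotone coupling, conditionally on
`S₀₀ = {X₁>0, Y₁>0, X₂>0, Y₃>0, X₃=0, Y₂=0}` one has `P(X₁ > X₂ | S₀₀) = 0` and
`P(Y₁ > Y₃ | S₀₀) = 0`, hence `ρ_{S₀₀} = 3·P(X₁ < X₂, Y₁ < Y₃ | S₀₀)`. -/
theorem rhoS00_countermonotone (μ : Measure (ℕ × ℕ)) [IsProbabilityMeasure μ]
    (hctm : Countermonotone μ) (p₁ p₂ : ℝ) (hp₁ : p₁ = F μ 0) (hp₂ : p₂ = G μ 0)
    (h1 : 0 < p₁) (h2 : 0 < p₂) (hsum : p₁ + p₂ < 1) :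
    cPr μ {ω | X₂ ω < X₁ ω} S00 = 0 ∧ cPr μ {ω | Y₃ ω < Y₁ ω} S00 = 0 ∧
      rhoCond μ S00 = 3 * cPr μ {ω | X₁ ω < X₂ ω ∧ Y₁ ω < Y₃ ω} S00 := by
  have hX : triple μ ({ω | X₂ ω < X₁ ω} ∩ S00) = 0 := by
    refine measure_mono_null ?_ (triple_fst_gt_snd hctm)
    rintro ω ⟨hlt, ⟨-, hY₁, -, -⟩, -, hY₂⟩
    exact ⟨hlt, hY₂.trans_lt hY₁⟩
  have hY : triple μ ({ω | Y₃ ω < Y₁ ω} ∩ S00) = 0 := by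
    refine measure_mono_null ?_ (triple_fst_gt_thd hctm)
    rintro ω ⟨hlt, ⟨hX₁, -, -, -⟩, hX₃, -⟩
    exact ⟨hX₃.trans_lt hX₁, hlt⟩
  have hD : triple μ (Disc ∩ S00) = 0 := by
    refine measure_mono_null ?_ (measure_union_null hX hY)
    rintro ω ⟨⟨-, hlt⟩ | ⟨hlt, -⟩, hS⟩
    · exact Or.inr ⟨hlt, hS⟩
    · exact Or.inl ⟨hlt, hS⟩
  have hC : triple μ (Conc ∩ S00)
      = triple μ ({ω | X₁ ω < X₂ ω ∧ Y₁ ω < Y₃ ω} ∩ S00) := by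
    apply le_antisymm
    · -- The other branch of concordance lies in `{X₂ < X₁}`, which is null on `S00`.
      refine (measure_mono (t := ({ω | X₁ ω < X₂ ω ∧ Y₁ ω < Y₃ ω} ∩ S00) ∪
        ({ω | X₂ ω < X₁ ω} ∩ S00)) ?_).trans ((measure_union_le _ _).trans (by rw [hX, add_zero]))
      rintro ω ⟨hlt | ⟨hlt, -⟩, hS⟩
      · exact Or.inl ⟨hlt, hS⟩
      · exact Or.inr ⟨hlt, hS⟩
    · refine measure_mono ?_
      rintro ω ⟨hlt, hS⟩
      exact ⟨Or.inl hlt, hS⟩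
  refine ⟨cPr_eq_zero hX, cPr_eq_zero hY, ?_⟩
  rw [rhoCond, cPr_eq_zero hD, cPr, cPr, Pr, Pr, hC]
  simp [Pr]

end ZIS
end
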